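/- Let m ≥ 9 and n ≥ m² − m + 1 be integers and let T be any tree on n vertices. Then every graph G on 2n − 1 vertices either contains the fan F_m as a subgraph or its complement contains T as a subgraph. (This is the upper bound R(T, F_m) ≤ 2n − 1 of Theorem 4; together with the standard lower bound it gives R(T, F_m) = 2n − 1.) -/

import Mathlib

/-- `Contains G H` means `G` contains a subgraph isomorphic to `H`, i.e. there is an
injective map on vertices preserving adjacency. -/
def Contains {α β : Type*} (G : SimpleGraph α) (H : SimpleGraph β) : Prop :=
  ∃ f : β → α, Function.Injective f ∧ ∀ ⦃u v⦄, H.Adj u v → G.Adj (f u) (f v)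

/-- The fan `F_m = K_1 + mK_2`: a center vertex joined to `m` disjoint edges,
so `m` triangles sharing exactly one common vertex; it has `2m + 1` vertices. -/
def fan (m : ℕ) : SimpleGraph (Unit ⊕ Fin m × Bool) :=
  SimpleGraph.fromRel (fun x y =>
    (∃ u, x = Sum.inl u) ∨ ∃ i : Fin m, x = Sum.inr (i, true) ∧ y = Sum.inr (i, false))

/-!
Put `q = m - 1` and suppose that `G` contains no fan `F_m`, so that the matchings inside a
neighbourhood `N(v)` have at most `q` edges. If no vertex has degree at least `n`, then `T` embeds
greedily in `Gᶜ`. Otherwise take `n` neighbours of a vertex. A maximum matching of the graph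
that they induce consists of edges between sets `X` and `Y` of equal size at most `q`, and the
unmatched vertices form a large independent set `I`; one can arrange that the vertices of `X`
have hardly any neighbours in `I`. Most of `T` is placed on `I`, and a few vertices of `T` of
degree at most four are placed on `X`. It remains to find `#X` further places.

Vertices outside `I` and `X` with at most `2q` neighbours in `I` are suitable places for tree
vertices whose neighbourhoods are under control. If there are fewer than `#X` such vertices, then
all other vertices outside `I ∪ X` have many neighbours in `I`, hence enough non-neighbours among
each other, and the missing part `D` of the tree, a union of branches, can be grown among them, starting from
non-neighbours in `I`. When `I` offers too few starting points, most of its vertices are adjacent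
to almost all of these vertices, which therefore induce small degrees, and a decomposition taken
among them succeeds directly.

The tree vertices wanted here exist unless some vertex `c` of `T` is adjacent to `q` leaves. In
that case `c` is placed on a vertex of degree less than `n` and these leaves are embedded last.
If all degrees were at least `n`, the graph would split into two halves inducing small degrees,
each with fewer than `n` vertices, although `G` has `2n - 1` of them.
-/

namespace RamseyTreeFan

open Finset
open scoped Classical

section Neighborhoods

variable {W : Type*} {G : SimpleGraph W} {u v w : W} {Z Z' : Finset W}

/-- The neighbourhood `N_G(v) ∩ Z` of a vertex inside a finite set of vertices; its cardinality
is the degree of `v` into `Z`. -/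
noncomputable def nbhd (G : SimpleGraph W) (v : W) (Z : Finset W) : Finset W :=
  {w ∈ Z | G.Adj v w}

lemma mem_nbhd : w ∈ nbhd G v Z ↔ w ∈ Z ∧ G.Adj v w := mem_filter

lemma nbhd_subset : nbhd G v Z ⊆ Z := filter_subset _ _

lemma nbhd_mono (h : Z ⊆ Z') : nbhd G v Z ⊆ nbhd G v Z' := filter_subset_filter _ h

lemma nbhd_union : nbhd G v (Z ∪ Z') = nbhd G v Z ∪ nbhd G v Z' := filter_union ..

lemma card_nbhd_union_le : #(nbhd G v (Z ∪ Z')) ≤ #(nbhd G v Z) + #(nbhd G v Z') :=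
  nbhd_union (G := G) ▸ card_union_le _ _

lemma card_nbhd_union (h : Disjoint Z Z') :
    #(nbhd G v (Z ∪ Z')) = #(nbhd G v Z) + #(nbhd G v Z') :=
  nbhd_union (G := G) ▸ card_union_of_disjoint (disjoint_filter_filter h)

lemma card_nbhd_le_add_card_sdiff : #(nbhd G v Z) ≤ #(nbhd G v Z') + #(Z \ Z') := by
  refine (card_le_card fun w hw ↦ ?_).trans (card_union_le _ _)
  by_cases w ∈ Z' <;> simp_all [mem_nbhd]

lemma card_nbhd_add_card_nbhd_compl (hv : v ∉ Z) :
    #(nbhd G v Z) + #(nbhd Gᶜ v Z) = #Z := by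
  rw [← card_filter_add_card_filter_not (s := Z) (fun w ↦ G.Adj v w)]
  congr 2
  ext w
  have hne : w ∈ Z → v ≠ w := fun hw hvw ↦ hv (hvw ▸ hw)
  simp only [mem_nbhd, mem_filter, SimpleGraph.compl_adj]
  tauto

lemma card_nbhd_add_card_nbhd_compl_add_one (hv : v ∈ Z) :
    #(nbhd G v Z) + #(nbhd Gᶜ v Z) + 1 = #Z := by
  have nbhd_erase (H : SimpleGraph W) : nbhd H v (Z.erase v) = nbhd H v Z := by
    rw [nbhd, filter_erase, erase_eq_of_notMem (by simp), nbhd]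
  rw [← card_erase_add_one hv, ← card_nbhd_add_card_nbhd_compl (G := G) (notMem_erase v Z),
    nbhd_erase, nbhd_erase]

lemma card_nbhd_add_card_nbhd_le :
    #(nbhd G u Z) + #(nbhd G v Z) ≤ #(nbhd G u (nbhd G v Z)) + #Z := by
  have h_inter : nbhd G u (nbhd G v Z) = nbhd G u Z ∩ nbhd G v Z := by
    ext; simp only [mem_nbhd, mem_inter]; tauto
  rw [h_inter, ← card_union_add_card_inter, add_comm]
  gcongr
  exact union_subset nbhd_subset nbhd_subset

lemma card_nbhd_add_card_nbhd_le_sdiff (M : Finset W) :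
    #(nbhd G u Z) + #(nbhd G v Z) ≤ #(nbhd G u (nbhd G v (Z \ M))) + #Z + #M := by
  have h_sub : nbhd G u (nbhd G v Z) ⊆ nbhd G u (nbhd G v (Z \ M)) ∪ M := by
    intro w hw
    simp only [mem_nbhd, mem_union, mem_sdiff] at hw ⊢
    tauto
  have h_card := (card_le_card h_sub).trans (card_union_le _ _)
  have := card_nbhd_add_card_nbhd_le (G := G) (u := u) (v := v) (Z := Z)
  omega

lemma card_mul_le_card_mul_of_card_nbhd {A B : Finset W} {k l : ℕ}
    (hA : ∀ a ∈ A, k ≤ #(nbhd G a B)) (hB : ∀ b ∈ B, #(nbhd G b A) ≤ l) :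
    #A * k ≤ #B * l :=
  card_mul_le_card_mul G.Adj hA fun b hb ↦ by
    simpa only [nbhd, bipartiteBelow, G.adj_comm b] using hB b hb

lemma not_adj_of_isIndepSet {I : Set W} (hI : G.IsIndepSet I) (hu : u ∈ I) (hv : v ∈ I) :
    ¬G.Adj u v :=
  fun h ↦ hI hu hv h.ne h

lemma card_nbhd_eq_zero_of_isIndepSet {I : Finset W} (hI : G.IsIndepSet (I : Set W))
    (hv : v ∈ I) : #(nbhd G v I) = 0 :=
  card_eq_zero.2 (filter_eq_empty_iff.2 fun _ hw ↦ not_adj_of_isIndepSet hI hv hw)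

variable [Fintype W]

lemma card_nbhd_univ [Fintype (G.neighborSet v)] : #(nbhd G v univ) = G.degree v := by
  rw [← G.card_neighborFinset_eq_degree]
  congr 1
  ext w
  simp [mem_nbhd]

lemma card_nbhd_add_card_nbhd_compl_set [Fintype (G.neighborSet v)] (Z : Finset W) :
    #(nbhd G v Z) + #(nbhd G v Zᶜ) = G.degree v := by
  rw [← card_nbhd_union disjoint_compl_right, union_compl, card_nbhd_univ]

lemma degree_add_degree_compl (v : W) [Fintype (G.neighborSet v)] [Fintype (Gᶜ.neighborSet v)] :
    G.degree v + Gᶜ.degree v + 1 = Fintype.card W := by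
  rw [← card_nbhd_univ (G := G), ← card_nbhd_univ (G := Gᶜ), ← card_univ]
  exact card_nbhd_add_card_nbhd_compl_add_one (mem_univ v)

end Neighborhoods

section SystemsOfRepresentatives

variable {ι α : Type*} [Nonempty α]

/-- If the candidate sets grow along the order in which the elements are served, then serving
the elements greedily never gets stuck. -/
lemma exists_injOn_mem (A : Finset ι) (t : ι → Finset α) (rank : ι → ℕ)
    (h : ∀ i ∈ A, #{j ∈ A | rank j ≤ rank i} ≤ #(t i)) :
    ∃ f : ι → α, Set.InjOn f A ∧ ∀ i ∈ A, f i ∈ t i := by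
  have hall (s : Finset A) : #s ≤ #(s.biUnion fun i ↦ t i) := by
    obtain rfl | hs := s.eq_empty_or_nonempty
    · simp
    obtain ⟨i, his, hi⟩ := s.exists_max_image (fun j ↦ rank j) hs
    calc #s = #(s.map (.subtype (· ∈ A))) := (card_map _).symm
      _ ≤ #{j ∈ A | rank j ≤ rank i} := card_le_card fun j hj ↦ by
          obtain ⟨j, hjs, rfl⟩ := mem_map.1 hj
          exact mem_filter.2 ⟨j.2, hi j hjs⟩
      _ ≤ #(t i) := h i i.2
      _ ≤ _ := card_le_card (subset_biUnion_of_mem (fun i : A ↦ t i) his)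
  obtain ⟨g, hg, hgt⟩ := (all_card_le_biUnion_card_iff_exists_injective _).1 hall
  let f := Function.extend Subtype.val g fun _ ↦ Classical.arbitrary α
  have hf (i : A) : f i = g i := Subtype.val_injective.extend_apply g _ i
  refine ⟨f, fun i hi j hj hij ↦ ?_, fun i hi ↦ hf ⟨i, hi⟩ ▸ hgt ⟨i, hi⟩⟩
  exact congrArg Subtype.val (hg (((hf ⟨i, hi⟩).symm.trans hij).trans (hf ⟨j, hj⟩)))

end SystemsOfRepresentatives

section Matchings

variable {W : Type*} {G : SimpleGraph W} {Z Z' : Finset W} {s s' m : ℕ}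

/-- The edges `e (i, true) e (i, false)`, for `i : ι`, form a matching of `G` inside `Z`. The
encoding follows the rim of `fan`. -/
structure IsMatchingIn {ι : Type*} (G : SimpleGraph W) (Z : Finset W) (e : ι × Bool → W) :
    Prop where
  injective : Function.Injective e
  mem (p) : e p ∈ Z
  adj (i) : G.Adj (e (i, true)) (e (i, false))

/-- `G[Z]` has a matching with `s` edges. -/
def HasMatching (G : SimpleGraph W) (Z : Finset W) (s : ℕ) : Prop :=
  ∃ e : Fin s × Bool → W, IsMatchingIn G Z e

namespace IsMatchingIn

variable {ι : Type*} {e : ι × Bool → W}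

lemma adj_not (h : IsMatchingIn G Z e) (i : ι) : ∀ b, G.Adj (e (i, b)) (e (i, !b))
  | true => h.adj i
  | false => (h.adj i).symm

lemma hasMatching [Fintype ι] (h : IsMatchingIn G Z e) : HasMatching G Z (Fintype.card ι) :=
  ⟨e ∘ Prod.map (Fintype.equivFin ι).symm id,
    h.injective.comp ((Equiv.injective _).prodMap Function.injective_id), fun _ ↦ h.mem _,
    fun _ ↦ h.adj _⟩

lemma hasMatching_of_forall_mem [Fintype ι] (h : IsMatchingIn G Z e) (h_mem : ∀ p, e p ∈ Z') :
    HasMatching G Z' (Fintype.card ι) :=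
  hasMatching ⟨h.injective, h_mem, h.adj⟩

lemma hasMatching_erase [Fintype ι] (h : IsMatchingIn G Z e) (i : ι)
    (h_mem : ∀ j b, j ≠ i → e (j, b) ∈ Z') : HasMatching G Z' (Fintype.card ι - 1) := by
  have h_erase : IsMatchingIn G Z' fun p : {j // j ≠ i} × Bool ↦ e (p.1, p.2) :=
    ⟨h.injective.comp (Subtype.val_injective.prodMap Function.injective_id),
      fun p ↦ h_mem _ _ p.1.2, fun j ↦ h.adj j⟩
  simpa [Fintype.card_subtype_compl] using h_erase.hasMatching

end IsMatchingIn

namespace HasMatching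

lemma zero : HasMatching G Z 0 :=
  ⟨fun p ↦ p.1.elim0, fun p ↦ p.1.elim0, fun p ↦ p.1.elim0, fun i ↦ i.elim0⟩

lemma mono (h : HasMatching G Z s) (hZ : Z ⊆ Z') : HasMatching G Z' s :=
  let ⟨e, he⟩ := h
  ⟨e, he.injective, fun p ↦ hZ (he.mem p), he.adj⟩

lemma of_adj {a b : W} (h : G.Adj a b) : HasMatching G {a, b} 1 :=
  ⟨fun p ↦ if p.2 then a else b,
    fun p q hpq ↦ by
      have := h.ne
      obtain ⟨i, _ | _⟩ := p <;> obtain ⟨j, _ | _⟩ := q <;> simp_all [Subsingleton.elim i j],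
    fun p ↦ by cases p.2 <;> simp, fun _ ↦ by simpa using h⟩

lemma union (h : HasMatching G Z s) (h' : HasMatching G Z' s') (hd : Disjoint Z Z') :
    HasMatching G (Z ∪ Z') (s + s') := by
  obtain ⟨e, he⟩ := h
  obtain ⟨e', he'⟩ := h'
  have h_sum : IsMatchingIn G (Z ∪ Z') (Sum.elim e e' ∘ Equiv.sumProdDistrib _ _ _) := by
    refine ⟨(he.injective.sumElim he'.injective fun p q ↦ ?_).comp (Equiv.injective _), ?_, ?_⟩
    · exact disjoint_iff_ne.1 hd _ (he.mem p) _ (he'.mem q)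
    · rintro ⟨i | i, b⟩ <;> simp [he.mem, he'.mem]
    · rintro (i | i) <;> simp [he.adj, he'.adj]
  simpa using h_sum.hasMatching

lemma exists_support (h : HasMatching G Z s) : ∃ M ⊆ Z, #M = 2 * s ∧ HasMatching G M s := by
  obtain ⟨e, he⟩ := h
  refine ⟨univ.image e, image_subset_iff.2 fun p _ ↦ he.mem p, ?_, e, he.injective,
    fun p ↦ mem_image_of_mem e (mem_univ p), he.adj⟩
  simp [card_image_of_injective _ he.injective, mul_comm]

lemma of_card_le_card_nbhd {A : Finset W} (hd : Disjoint A Z)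
    (h : ∀ a ∈ A, #A ≤ #(nbhd G a Z)) : HasMatching G (A ∪ Z) #A := by
  obtain rfl | ⟨a₀, -⟩ := A.eq_empty_or_nonempty
  · exact zero
  have : Nonempty W := ⟨a₀⟩
  obtain ⟨f, hf, hfA⟩ := exists_injOn_mem A (fun a ↦ nbhd G a Z) 0 (by simpa using h)
  simp only [mem_nbhd] at hfA
  have h_cross : IsMatchingIn G (A ∪ Z) fun p : A × Bool ↦ if p.2 then p.1.1 else f p.1 := by
    refine ⟨?_, ?_, fun a ↦ by simpa using (hfA a a.2).2⟩
    · have hne (a b : A) : a.1 ≠ f b := disjoint_iff_ne.1 hd _ a.2 _ (hfA b b.2).1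
      rintro ⟨a, _ | _⟩ ⟨b, _ | _⟩ hab
      · simpa using hf a.2 b.2 (by simpa using hab)
      · exact absurd hab.symm (hne _ _)
      · exact absurd hab (hne _ _)
      · exact congrArg (·, true) (Subtype.ext (by simpa using hab))
    · rintro ⟨a, _ | _⟩
      · exact mem_union_right _ (hfA a a.2).1
      · exact mem_union_left _ a.2
  simpa using h_cross.hasMatching

end HasMatching

lemma contains_fan_of_hasMatching {v : W} (hZ : ∀ z ∈ Z, G.Adj v z) (h : HasMatching G Z m) :
    Contains G (fan m) := by
  obtain ⟨e, he⟩ := h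
  have hv (p) : G.Adj v (e p) := hZ _ (he.mem p)
  refine ⟨Sum.elim (fun _ ↦ v) e,
    (Function.injective_of_subsingleton _).sumElim he.injective fun _ p ↦ (hv p).ne, ?_⟩
  rintro (_ | p) (_ | q) hpq <;> simp only [fan, SimpleGraph.fromRel_adj, Sum.elim_inl,
    Sum.elim_inr] at hpq ⊢
  · simp at hpq
  · exact hv q
  · exact (hv p).symm
  · obtain ⟨-, h | h⟩ := hpq <;> obtain ⟨i, rfl, rfl⟩ : ∃ i, _ ∧ _ := by simpa using h
    · exact he.adj i
    · exact (he.adj i).symm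

lemma contains_fan_of_le_card_nbhd_nbhd {A : Finset W} {u : W} (hA : ∀ a ∈ A, G.Adj u a)
    (hmA : m ≤ #A) (hd : Disjoint A Z) (h : ∀ a ∈ A, m ≤ #(nbhd G a (nbhd G u Z))) :
    Contains G (fan m) := by
  obtain ⟨B, hBA, rfl⟩ := exists_subset_card_eq hmA
  have h_match : HasMatching G (B ∪ nbhd G u Z) #B :=
    .of_card_le_card_nbhd (disjoint_of_subset_left hBA (disjoint_of_subset_right nbhd_subset hd))
      fun a ha ↦ h a (hBA ha)
  refine contains_fan_of_hasMatching (v := u) (fun z hz ↦ ?_) h_match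
  obtain hz | hz := mem_union.1 hz
  · exact hA z (hBA hz)
  · exact (mem_nbhd.1 hz).2

end Matchings

section MatchingDecomposition

variable {W : Type*} {G : SimpleGraph W} {S Z : Finset W} {s m q : ℕ}

lemma exists_maximum_matching (h : ¬HasMatching G S m) :
    ∃ s < m, HasMatching G S s ∧ ¬HasMatching G S (s + 1) := by
  induction m with
  | zero => exact absurd .zero h
  | succ k ih =>
    by_cases hk : HasMatching G S k
    · exact ⟨k, k.lt_succ_self, hk, h⟩
    · obtain ⟨s, hs, h_max⟩ := ih hk
      exact ⟨s, hs.trans k.lt_succ_self, h_max⟩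

namespace IsMatchingIn

variable {e : Fin s × Bool → W}

lemma card_sdiff_image_add (he : IsMatchingIn G S e) : #(S \ univ.image e) + 2 * s = #S := by
  rw [← card_sdiff_add_card_eq_card (image_subset_iff.2 fun p _ ↦ he.mem p :
    univ.image e ⊆ S), card_image_of_injective _ he.injective]
  simp [mul_comm]

/-- Otherwise two adjacent unmatched vertices would enlarge the matching. -/
lemma isIndepSet_sdiff_image (he : IsMatchingIn G S e) (h_max : ¬HasMatching G S (s + 1)) :
    G.IsIndepSet (S \ univ.image e : Finset W) := by
  intro a ha b hb _ hab
  simp only [coe_sdiff, coe_image, coe_univ, Set.image_univ, Set.mem_sdiff, mem_coe,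
    Set.mem_range, not_exists] at ha hb
  have h_rest : HasMatching G (S \ {a, b}) s := by
    simpa using he.hasMatching_of_forall_mem fun p ↦ by simp [he.mem p, ha.2 p, hb.2 p]
  refine h_max ((h_rest.union (.of_adj hab) sdiff_disjoint).mono ?_)
  simp [insert_subset_iff, ha.1, hb.1]

/-- Otherwise `a, e (i, b), e (i, !b), c` would be an augmenting path. -/
lemma eq_of_mem_nbhd_sdiff_image (he : IsMatchingIn G S e) (h_max : ¬HasMatching G S (s + 1))
    {i : Fin s} {b : Bool} {a c : W} (ha : a ∈ nbhd G (e (i, b)) (S \ univ.image e))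
    (hc : c ∈ nbhd G (e (i, !b)) (S \ univ.image e)) : a = c := by
  by_contra hac
  simp only [mem_nbhd, mem_sdiff, mem_image, mem_univ, true_and, not_exists] at ha hc
  obtain ⟨⟨haS, hae⟩, hab⟩ := ha
  obtain ⟨⟨hcS, hce⟩, hcb⟩ := hc
  have hne : e (i, b) ≠ e (i, !b) := (he.adj_not i b).ne
  have h_rest : HasMatching G (S \ ({e (i, b), a} ∪ {e (i, !b), c})) (s - 1) := by
    simpa using he.hasMatching_erase i fun j b' hj ↦ by
      simp [he.mem, he.injective.eq_iff, hj, hae, hce]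
  have h_two : HasMatching G ({e (i, b), a} ∪ {e (i, !b), c}) (1 + 1) :=
    .union (.of_adj hab) (.of_adj hcb) (by
      simp [hne.symm, hae, Ne.symm hac, Ne.symm (hce (i, b))])
  refine h_max ?_
  have hs : s + 1 = s - 1 + (1 + 1) := by have := i.pos; omega
  rw [hs]
  refine (h_rest.union h_two sdiff_disjoint).mono ?_
  simp [insert_subset_iff, haS, hcS, he.mem]

lemma exists_orientation (he : IsMatchingIn G S e) (h_max : ¬HasMatching G S (s + 1))
    (i : Fin s) :
    ∃ b, nbhd G (e (i, b)) (S \ univ.image e) ⊆ nbhd G (e (i, !b)) (S \ univ.image e) ∧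
      ((nbhd G (e (i, b)) (S \ univ.image e)).Nonempty →
        #(nbhd G (e (i, !b)) (S \ univ.image e)) ≤ 1) := by
  obtain h_empty | ⟨a, ha⟩ := (nbhd G (e (i, true)) (S \ univ.image e)).eq_empty_or_nonempty
  · exact ⟨true, by simp [h_empty]⟩
  obtain h_empty | ⟨c, hc⟩ := (nbhd G (e (i, false)) (S \ univ.image e)).eq_empty_or_nonempty
  · exact ⟨false, by simp [h_empty]⟩
  have h_eq {a c : W} (ha : a ∈ nbhd G (e (i, true)) (S \ univ.image e))
      (hc : c ∈ nbhd G (e (i, false)) (S \ univ.image e)) : a = c :=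
    he.eq_of_mem_nbhd_sdiff_image h_max ha hc
  refine ⟨true, fun x hx ↦ h_eq hx hc ▸ hc, fun _ ↦ card_le_one.2 fun x hx y hy ↦ ?_⟩
  exact (h_eq ha hx).symm.trans (h_eq ha hy)

end IsMatchingIn

/-- The partition of `S` induced by a maximum matching of `G[S]`: `X` and `Y` hold one end of
each matching edge and `I` the unmatched vertices, each edge being oriented so that its end in
`X` has no more neighbours in `I` than its end in `Y`. The set `F` collects the unmatched
vertices with a neighbour in `X`. -/
structure MatchingDecomp (G : SimpleGraph W) (S X Y I F : Finset W) : Prop where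
  card_X_eq : #X = #Y
  X_subset : X ⊆ S
  Y_subset : Y ⊆ S
  I_subset : I ⊆ S
  disjoint_XY : Disjoint X Y
  disjoint_XI : Disjoint X I
  disjoint_YI : Disjoint Y I
  card_add_two_mul : #I + 2 * #X = #S
  isIndepSet : G.IsIndepSet (I : Set W)
  not_adj : ∀ x ∈ X, ∀ a ∈ I \ F, ¬G.Adj x a
  card_F_le : #F ≤ #{y ∈ Y | #(nbhd G y I) ≤ 1}
  exists_adj_of_mem_F : ∀ a ∈ F, ∃ y ∈ Y, G.Adj y a
  exists_adj_of_mem_Y : ∀ y ∈ Y, ∃ x ∈ X, G.Adj y x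

lemma card_filter_exists_adj_le {x y : Fin s → W} {I : Finset W}
    (h_sub : ∀ i, nbhd G (x i) I ⊆ nbhd G (y i) I)
    (h_one : ∀ i, (nbhd G (x i) I).Nonempty → #(nbhd G (y i) I) ≤ 1) :
    #{a ∈ I | ∃ i, G.Adj (x i) a} ≤ #{w ∈ univ.image y | #(nbhd G w I) ≤ 1} := by
  refine (card_le_card fun a ha ↦ ?_).trans
    ((card_biUnion_le_card_mul _ (nbhd G · I) 1 fun w hw ↦ (mem_filter.1 hw).2).trans_eq
      (mul_one _))
  obtain ⟨haI, i, hia⟩ := mem_filter.1 ha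
  have ha' : a ∈ nbhd G (x i) I := mem_nbhd.2 ⟨haI, hia⟩
  exact mem_biUnion.2
    ⟨y i, mem_filter.2 ⟨mem_image_of_mem y (mem_univ i), h_one i ⟨a, ha'⟩⟩, h_sub i ha'⟩

lemma IsMatchingIn.matchingDecomp {e : Fin s × Bool → W} (he : IsMatchingIn G S e)
    {c : Fin s → Bool} {I : Finset W} (hI : I = S \ univ.image e)
    (h_indep : G.IsIndepSet (I : Set W))
    (h_sub : ∀ i, nbhd G (e (i, c i)) I ⊆ nbhd G (e (i, !c i)) I)
    (h_one : ∀ i, (nbhd G (e (i, c i)) I).Nonempty → #(nbhd G (e (i, !c i)) I) ≤ 1) :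
    MatchingDecomp G S (univ.image fun i ↦ e (i, c i)) (univ.image fun i ↦ e (i, !c i)) I
      {a ∈ I | ∃ i, G.Adj (e (i, c i)) a} := by
  have card_ends (d : Fin s → Bool) : #(univ.image fun i ↦ e (i, d i)) = s := by
    rw [card_image_of_injective _ fun i j hij ↦ (Prod.ext_iff.1 (he.injective hij)).1, card_fin]
  have notMem_I (p) : e p ∉ I := by simp [hI]
  constructor
  case card_X_eq => rw [card_ends, card_ends]
  case X_subset => exact image_subset_iff.2 fun i _ ↦ he.mem _
  case Y_subset => exact image_subset_iff.2 fun i _ ↦ he.mem _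
  case I_subset => exact hI ▸ sdiff_subset
  case disjoint_XY =>
    simp only [disjoint_left, mem_image, mem_univ, true_and]
    rintro _ ⟨i, rfl⟩ ⟨j, hij⟩
    obtain ⟨rfl, hb⟩ := Prod.ext_iff.1 (he.injective hij)
    simp at hb
  case disjoint_XI => simpa [disjoint_left] using fun i ↦ notMem_I _
  case disjoint_YI => simpa [disjoint_left] using fun i ↦ notMem_I _
  case card_add_two_mul => rw [hI, card_ends, he.card_sdiff_image_add]
  case isIndepSet => exact h_indep
  case not_adj => simp +contextual
  case card_F_le => exact card_filter_exists_adj_le h_sub h_one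
  case exists_adj_of_mem_F =>
    intro a ha
    obtain ⟨haI, i, hia⟩ := mem_filter.1 ha
    have hia' := (mem_nbhd.1 (h_sub i (mem_nbhd.2 ⟨haI, hia⟩))).2
    exact ⟨_, mem_image_of_mem _ (mem_univ i), hia'⟩
  case exists_adj_of_mem_Y => simpa using fun i ↦ ⟨i, (he.adj_not i (c i)).symm⟩

lemma exists_matchingDecomp (h : ¬HasMatching G S m) :
    ∃ X Y I F, MatchingDecomp G S X Y I F ∧ #X < m := by
  obtain ⟨s, hsm, ⟨e, he⟩, h_max⟩ := exists_maximum_matching h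
  choose c hc using he.exists_orientation h_max
  refine ⟨_, _, _, _, he.matchingDecomp rfl (he.isIndepSet_sdiff_image h_max)
    (fun i ↦ (hc i).1) (fun i ↦ (hc i).2), ?_⟩
  exact card_image_le.trans_lt (by simpa using hsm)

lemma exists_matchingDecomp_of_le_card_nbhd {v : W} (h_fan : ¬Contains G (fan m))
    (hq : q ≤ #(nbhd G v Z)) :
    ∃ S ⊆ nbhd G v Z, #S = q ∧ ∃ X Y I F, MatchingDecomp G S X Y I F ∧ #X < m := by
  obtain ⟨S, hS, hSq⟩ := exists_subset_card_eq hq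
  exact ⟨S, hS, hSq, exists_matchingDecomp fun h ↦
    h_fan (contains_fan_of_hasMatching (fun z hz ↦ (mem_nbhd.1 (hS hz)).2) h)⟩

namespace MatchingDecomp

variable {X Y I F : Finset W}

lemma union_eq (h : MatchingDecomp G S X Y I F) : X ∪ Y ∪ I = S := by
  refine eq_of_subset_of_card_le
    (union_subset (union_subset h.X_subset h.Y_subset) h.I_subset) ?_
  rw [card_union_of_disjoint (disjoint_union_left.2 ⟨h.disjoint_XI, h.disjoint_YI⟩),
    card_union_of_disjoint h.disjoint_XY, ← h.card_add_two_mul, ← h.card_X_eq]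
  omega

lemma filter_nonempty_nbhd_subset (h : MatchingDecomp G S X Y I F) :
    {v ∈ S | (nbhd G v S).Nonempty} ⊆ X ∪ Y ∪ Y.biUnion fun y ↦ nbhd G y I := by
  intro v hv
  obtain ⟨hvS, w, hw⟩ := mem_filter.1 hv
  obtain ⟨hwS, hvw⟩ := mem_nbhd.1 hw
  rw [← h.union_eq] at hvS hwS
  obtain hv | hvI := mem_union.1 hvS
  · exact mem_union_left _ hv
  suffices ∃ y ∈ Y, G.Adj y v from
    mem_union_right _ (mem_biUnion.2 (this.imp fun y hy ↦ ⟨hy.1, mem_nbhd.2 ⟨hvI, hy.2⟩⟩))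
  obtain hw | hwI := mem_union.1 hwS
  · obtain hwX | hwY := mem_union.1 hw
    · by_cases hvF : v ∈ F
      · exact h.exists_adj_of_mem_F v hvF
      · exact absurd hvw.symm (h.not_adj w hwX v (mem_sdiff.2 ⟨hvI, hvF⟩))
    · exact ⟨w, hwY, hvw.symm⟩
  · exact absurd hvw (not_adj_of_isIndepSet h.isIndepSet hvI hwI)

lemma card_nbhd_I_lt (h : MatchingDecomp G S X Y I F) {y : W} (hy : y ∈ Y) :
    #(nbhd G y I) < #(nbhd G y S) := by
  obtain ⟨x, hxX, hyx⟩ := h.exists_adj_of_mem_Y y hy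
  refine card_lt_card ⟨nbhd_mono h.I_subset, fun hle ↦ ?_⟩
  have hxI := hle (mem_nbhd.2 ⟨h.X_subset hxX, hyx⟩)
  exact disjoint_left.1 h.disjoint_XI hxX (nbhd_subset hxI)

end MatchingDecomp

lemma card_filter_nonempty_nbhd_le {d ν : ℕ} (hd : ∀ v ∈ S, #(nbhd G v S) ≤ d)
    (h : ¬HasMatching G S (ν + 1)) : #{v ∈ S | (nbhd G v S).Nonempty} ≤ ν * (d + 1) := by
  obtain ⟨X, Y, I, F, h_dec, hX⟩ := exists_matchingDecomp h
  have hY : #Y ≤ ν := by rw [← h_dec.card_X_eq]; omega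
  have h_nbhd : #(Y.biUnion fun y ↦ nbhd G y I) + #Y ≤ #Y * d := calc
    _ ≤ ∑ y ∈ Y, (#(nbhd G y I) + 1) := by
      rw [sum_add_distrib, ← card_eq_sum_ones]
      gcongr
      exact card_biUnion_le
    _ ≤ #Y * d := sum_le_card_nsmul _ _ _ fun y hy ↦
      (h_dec.card_nbhd_I_lt hy).trans_le (hd y (h_dec.Y_subset hy))
  calc #{v ∈ S | (nbhd G v S).Nonempty}
      ≤ #X + #Y + #(Y.biUnion fun y ↦ nbhd G y I) := by
        grw [h_dec.filter_nonempty_nbhd_subset, card_union_le, card_union_le]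
    _ ≤ #Y * (d + 1) := by rw [h_dec.card_X_eq, mul_add_one]; omega
    _ ≤ ν * (d + 1) := by gcongr

end MatchingDecomposition

section LargeMinimumDegree

variable {W : Type*} {G : SimpleGraph W} {A B I : Finset W} {n q r : ℕ} {u z : W}

lemma card_nbhd_lt_of_lt_card_nbhd_isIndepSet (h_fan : ¬Contains G (fan (q + 1)))
    (hI : G.IsIndepSet (I : Set W)) (hIB : Disjoint I B) (hB : #B < n)
    (h_deg : ∀ u, n ≤ #(nbhd G u I) + r + #(nbhd G u B)) (hu : q < #(nbhd G u I)) :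
    #(nbhd G u B) < q + r := by
  by_contra! hle
  refine h_fan (contains_fan_of_le_card_nbhd_nbhd (fun a ha ↦ (mem_nbhd.1 ha).2) hu
    (disjoint_of_subset_left nbhd_subset hIB) fun a ha ↦ ?_)
  have h_common := card_nbhd_add_card_nbhd_le (G := G) (u := a) (v := u) (Z := B)
  have ha := h_deg a
  rw [card_nbhd_eq_zero_of_isIndepSet hI (nbhd_subset ‹_›)] at ha
  omega

lemma mul_lt_card_filter_nbhd_eq_empty {S : Finset W} {δ : ℕ}
    (h_match : ¬HasMatching G S (q - δ + 1)) (hδ : δ ≤ q) (hS : q ^ 2 + q + 1 ≤ #S + δ)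
    (h_deg : ∀ v ∈ S, #(nbhd G v S) ≤ q) : q * δ < #{v ∈ S | nbhd G v S = ∅} := by
  have h_nonisolated := card_filter_nonempty_nbhd_le h_deg h_match
  have h_add := card_filter_add_card_filter_not (s := S) fun v ↦ nbhd G v S = ∅
  simp only [← Ne.eq_def, ← nonempty_iff_ne_empty] at h_add
  obtain ⟨k, rfl⟩ := Nat.exists_eq_add_of_le hδ
  rw [Nat.add_sub_cancel_left] at h_nonisolated
  nlinarith

lemma card_le_mul_of_lt_card_nbhd {J : Finset W} {i δ : ℕ} (hJ : ∀ v ∈ J, i < #(nbhd G v B))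
    (hB : ∀ b ∈ B, #(nbhd G b J) ≤ q) (h_card : #B ≤ i + δ) : #J ≤ q * δ := by
  by_contra! h_lt
  obtain rfl | h_pos := δ.eq_zero_or_pos
  · obtain ⟨v, hv⟩ : J.Nonempty := card_pos.1 (by omega)
    have := hJ v hv
    have := card_le_card (nbhd_subset (G := G) (v := v) (Z := B))
    omega
  · have h_count := card_mul_le_card_mul_of_card_nbhd hJ hB
    have h_low := Nat.mul_le_mul_right (i + 1) h_lt
    have h_high := Nat.mul_le_mul_right q h_card
    have : q * i ≤ q * i * δ := Nat.le_mul_of_pos_right _ h_pos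
    nlinarith

variable [Fintype W]

lemma card_nbhd_filter_card_nbhd_le (h_fan : ¬Contains G (fan (q + 1))) (hn : 9 * q + 1 ≤ n)
    (hr : r ≤ 2 * q) (hB : #B < n) (h_deg : ∀ u, n ≤ #(nbhd G u I) + r + #(nbhd G u B))
    (hu : #(nbhd G u I) ≤ q) : #(nbhd G u {a | #(nbhd G a I) ≤ q}) ≤ q := by
  by_contra! hlt
  obtain ⟨A, hA, hAq⟩ := exists_subset_card_eq (Nat.succ_le_of_lt hlt)
  refine h_fan (contains_fan_of_le_card_nbhd_nbhd (u := u) (Z := B \ A)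
    (fun a ha ↦ (mem_nbhd.1 (hA ha)).2) hAq.ge disjoint_sdiff fun a ha ↦ ?_)
  have h_common := card_nbhd_add_card_nbhd_le_sdiff (G := G) (u := a) (v := u) (Z := B) A
  have ha' : #(nbhd G a I) ≤ q := (mem_filter.1 (mem_nbhd.1 (hA ha)).1).2
  have := h_deg a
  have := h_deg u
  omega

lemma card_nbhd_filter_lt_card_nbhd (h_fan : ¬Contains G (fan (q + 1))) (hn : 9 * q + 1 ≤ n)
    (hr : r ≤ 2 * q) (hI : G.IsIndepSet (I : Set W)) (hIr : #I + r ≤ n) (hIB : Disjoint I B)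
    (hB : #B < n) (h_deg : ∀ u, n ≤ #(nbhd G u I) + r + #(nbhd G u B))
    (hu : q < #(nbhd G u I)) : #(nbhd G u {a | q < #(nbhd G a I)}) ≤ q := by
  by_contra! hlt
  have h_lt {a : W} (ha : a ∈ nbhd G u {a | q < #(nbhd G a I)}) : q < #(nbhd G a I) :=
    (mem_filter.1 (mem_nbhd.1 ha).1).2
  refine h_fan (contains_fan_of_le_card_nbhd_nbhd (fun a ha ↦ (mem_nbhd.1 ha).2) hlt
    (Z := I) (disjoint_left.2 fun a ha haI ↦ ?_) fun a ha ↦ ?_)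
  · exact (h_lt ha).ne_bot (card_nbhd_eq_zero_of_isIndepSet hI haI)
  · have ha' := card_nbhd_lt_of_lt_card_nbhd_isIndepSet h_fan hI hIB hB h_deg (h_lt ha)
    have hu' := card_nbhd_lt_of_lt_card_nbhd_isIndepSet h_fan hI hIB hB h_deg hu
    have h_common := card_nbhd_add_card_nbhd_le (G := G) (u := a) (v := u) (Z := I)
    have := h_deg a
    have := h_deg u
    omega

lemma exists_partition_card_nbhd_le (h_fan : ¬Contains G (fan (q + 1))) (hn : 9 * q + 1 ≤ n)
    (hW : Fintype.card W + 1 = 2 * n) (h_deg : ∀ v, n ≤ G.degree v) :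
    ∃ A : Finset W, (∀ u ∈ A, #(nbhd G u A) ≤ q) ∧ ∀ u ∈ Aᶜ, #(nbhd G u Aᶜ) ≤ q := by
  obtain ⟨v⟩ : Nonempty W := Fintype.card_pos_iff.1 (by omega)
  obtain ⟨S, -, hS, X, Y, I, F, h_dec, hX⟩ :=
    exists_matchingDecomp_of_le_card_nbhd h_fan ((h_deg v).trans_eq card_nbhd_univ.symm)
  have h_card := h_dec.card_add_two_mul
  have hSc : #Sᶜ < n := by rw [card_compl]; omega
  have h_deg' (u : W) : n ≤ #(nbhd G u I) + 2 * #X + #(nbhd G u Sᶜ) := by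
    have := card_nbhd_le_add_card_sdiff (G := G) (v := u) (Z := S) (Z' := I)
    have := card_sdiff_add_card_eq_card h_dec.I_subset
    have := card_nbhd_add_card_nbhd_compl_set (G := G) (v := u) S
    have := h_deg u
    omega
  have hIS : Disjoint I Sᶜ := disjoint_of_subset_left h_dec.I_subset disjoint_compl_right
  refine ⟨univ.filter fun u ↦ #(nbhd G u I) ≤ q, fun u hu ↦ ?_, fun u hu ↦ ?_⟩
  · exact card_nbhd_filter_card_nbhd_le h_fan hn (by omega) hSc h_deg' (mem_filter.1 hu).2
  · simp only [compl_filter, not_le, mem_filter, mem_univ, true_and] at hu ⊢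
    exact card_nbhd_filter_lt_card_nbhd h_fan hn (by omega) h_dec.isIndepSet (by omega) hIS hSc
      h_deg' hu

/-- Joined to a matching of `N(z) ∩ A`, the neighbours of `z` outside `A` would complete a fan
centred at `z`. -/
lemma not_hasMatching_nbhd (h_fan : ¬Contains G (fan (q + 1))) (hn : 9 * q + 1 ≤ n)
    (h_deg : ∀ v, n ≤ G.degree v) (hA : #A < n + q) (hB : ∀ u ∈ Aᶜ, #(nbhd G u Aᶜ) ≤ q)
    (hz : z ∈ Aᶜ) : ¬HasMatching G (nbhd G z A) (q - #(nbhd G z Aᶜ) + 1) := by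
  intro h_match
  obtain ⟨M, hMA, hM, h_matchM⟩ := h_match.exists_support
  have h_deg' (u : W) := (h_deg u).trans_eq (card_nbhd_add_card_nbhd_compl_set A).symm
  have hMA' : M ⊆ A := hMA.trans nbhd_subset
  have h_cross : HasMatching G (nbhd G z Aᶜ ∪ nbhd G z (A \ M)) #(nbhd G z Aᶜ) := by
    refine .of_card_le_card_nbhd (disjoint_of_subset_left nbhd_subset
      (disjoint_of_subset_right (nbhd_subset.trans sdiff_subset) disjoint_compl_left))
      fun d hd ↦ ?_
    have h_common := card_nbhd_add_card_nbhd_le_sdiff (G := G) (u := d) (v := z) (Z := A) M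
    have := h_deg' d
    have := h_deg' z
    have := hB d (nbhd_subset hd)
    have := hB z hz
    omega
  have h_disj : Disjoint M (nbhd G z Aᶜ ∪ nbhd G z (A \ M)) := disjoint_union_right.2
    ⟨disjoint_of_subset_right nbhd_subset (disjoint_of_subset_left hMA' disjoint_compl_right),
      disjoint_of_subset_right nbhd_subset disjoint_sdiff⟩
  have h_all := h_matchM.union h_cross h_disj
  rw [add_right_comm, Nat.sub_add_cancel (hB z hz)] at h_all
  refine h_fan (contains_fan_of_hasMatching (v := z) (fun w hw ↦ ?_) h_all)
  simp only [mem_union, mem_nbhd] at hw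
  exact hw.elim (fun hw ↦ (mem_nbhd.1 (hMA hw)).2) fun hw ↦ hw.elim And.right And.right

lemma card_lt_of_forall_card_nbhd_le (h_fan : ¬Contains G (fan (q + 1))) (hn : 9 * q + 1 ≤ n)
    (hn' : q ^ 2 + q + 1 ≤ n) (hW : Fintype.card W + 1 = 2 * n) (h_deg : ∀ v, n ≤ G.degree v)
    (hA : ∀ u ∈ A, #(nbhd G u A) ≤ q) (hB : ∀ u ∈ Aᶜ, #(nbhd G u Aᶜ) ≤ q) : #A < n := by
  by_contra! hnA
  have h_deg' (u : W) := (h_deg u).trans_eq (card_nbhd_add_card_nbhd_compl_set A).symm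
  have h_compl : #Aᶜ + #A + 1 = 2 * n := by rw [card_compl_add_card, hW]
  have h_out (u : W) : #(nbhd G u Aᶜ) ≤ #Aᶜ := card_le_card nbhd_subset
  obtain ⟨a, ha⟩ : A.Nonempty := card_pos.1 (by omega)
  have hAq : #A < n + q := by
    have := h_deg' a
    have := hA a ha
    have := h_out a
    omega
  obtain ⟨z, hz⟩ : Aᶜ.Nonempty := card_pos.1 (by omega)
  set N := nbhd G z A
  set δ := #(nbhd G z Aᶜ)
  have hNA : N ⊆ A := nbhd_subset
  have hN : n ≤ #N + δ := h_deg' z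
  have h_isolated : q * δ < #{v ∈ N | nbhd G v N = ∅} :=
    mul_lt_card_filter_nbhd_eq_empty (not_hasMatching_nbhd h_fan hn h_deg hAq hB hz) (hB z hz)
      (hn'.trans hN) fun v hv ↦ (card_le_card (nbhd_mono hNA)).trans (hA v (hNA hv))
  have h_missed : #(A \ N) ≤ #A - n + δ := by
    have := card_sdiff_add_card_eq_card hNA
    omega
  refine h_isolated.not_ge (card_le_mul_of_lt_card_nbhd (G := G) (fun v hv ↦ ?_)
    (fun b hb ↦ ?_) h_missed)
  · have h_split := card_nbhd_union (G := G) (v := v) (disjoint_sdiff (s := N) (t := A))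
    rw [union_sdiff_of_subset hNA, (mem_filter.1 hv).2, card_empty] at h_split
    have := h_deg' v
    have := h_out v
    omega
  · exact (card_le_card (nbhd_mono ((filter_subset _ _).trans hNA))).trans
      (hA b (mem_sdiff.1 hb).1)

lemma exists_degree_lt (h_fan : ¬Contains G (fan (q + 1))) (hn : 9 * q + 1 ≤ n)
    (hn' : q ^ 2 + q + 1 ≤ n) (hW : Fintype.card W + 1 = 2 * n) : ∃ v, G.degree v < n := by
  by_contra! h_deg
  obtain ⟨A, hA, hB⟩ := exists_partition_card_nbhd_le h_fan hn hW h_deg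
  have h_lt := card_lt_of_forall_card_nbhd_le h_fan hn hn' hW h_deg hA hB
  have h_lt' := card_lt_of_forall_card_nbhd_le h_fan hn hn' hW h_deg hB (by simpa using hA)
  have := card_compl_add_card A
  omega

end LargeMinimumDegree

section Trees

variable {V : Type*} {T : SimpleGraph V} {q : ℕ}

lemma exists_isIndepSet_of_colorable {k : ℕ} (hT : T.Colorable k) {A : Finset V}
    (hq : k * q < #A + k) : ∃ B ⊆ A, #B = q ∧ T.IsIndepSet (B : Set V) := by
  obtain ⟨c⟩ := hT
  obtain ⟨i, hi⟩ : ∃ i, q ≤ #{v ∈ A | c v = i} := by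
    by_contra! hlt
    have h_sum := card_eq_sum_card_fiberwise (f := c) (s := A) (t := univ) fun _ _ ↦ mem_univ _
    have h_le : #A + k ≤ k * q := by
      rw [h_sum, ← smul_eq_mul]
      simpa [sum_add_distrib] using sum_le_card_nsmul (univ : Finset (Fin k))
        (fun i ↦ #{v ∈ A | c v = i} + 1) q fun i _ ↦ hlt i
    omega
  obtain ⟨B, hB, hBq⟩ := exists_subset_card_eq hi
  refine ⟨B, hB.trans (filter_subset _ _), hBq, fun u hu v hv _ huv ↦ c.valid huv ?_⟩
  rw [(mem_filter.1 (hB hu)).2, (mem_filter.1 (hB hv)).2]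

variable [Fintype V]

/-- The neighbourhood `N_T(L)` of a set of vertices: all vertices with a neighbour in `L`. -/
noncomputable def setNbhd (T : SimpleGraph V) (L : Finset V) : Finset V :=
  L.biUnion fun v ↦ T.neighborFinset v

lemma mem_setNbhd {L : Finset V} {v : V} : v ∈ setNbhd T L ↔ ∃ u ∈ L, T.Adj u v := by
  simp [setNbhd]

lemma setNbhd_mono {L L' : Finset V} (h : L ⊆ L') : setNbhd T L ⊆ setNbhd T L' :=
  biUnion_subset_biUnion_of_subset_left _ h

lemma card_setNbhd_le (L : Finset V) : #(setNbhd T L) ≤ ∑ v ∈ L, T.degree v := card_biUnion_le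

lemma sum_degree_le_card_edgeFinset {A : Finset V} (hA : T.IsIndepSet (A : Set V)) :
    ∑ v ∈ A, T.degree v ≤ #T.edgeFinset := by
  have h_disj : (A : Set V).PairwiseDisjoint (T.incidenceFinset ·) := by
    intro u hu v hv huv
    refine disjoint_left.2 fun e heu hev ↦ hA hu hv huv ?_
    rw [T.mem_incidenceFinset] at heu hev
    exact T.adj_of_mem_incidenceSet huv heu hev
  simp_rw [← T.card_incidenceFinset_eq_degree]
  rw [← card_biUnion h_disj]
  exact card_le_card (biUnion_subset.2 fun v _ ↦ T.incidenceFinset_subset v)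

lemma exists_isIndepSet_card_setNbhd_le (hT : T.IsTree) (hn : 9 * q + 1 ≤ Fintype.card V)
    {E : Finset V} (hE : #E ≤ 3 * q) :
    ∃ L, Disjoint L E ∧ #L = q ∧ T.IsIndepSet (L : Set V) ∧ #(setNbhd T L) ≤ 4 * q := by
  have h_compl := card_compl_add_card E
  obtain ⟨A, hAE, hA, hA_indep⟩ := exists_isIndepSet_of_colorable hT.colorable_two (A := Eᶜ)
    (q := (Fintype.card V - 3 * q + 1) / 2) (by omega)
  have h_edges : ∑ v ∈ A, T.degree v + 1 ≤ Fintype.card V :=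
    hT.card_edgeFinset ▸ Nat.add_le_add_right (sum_degree_le_card_edgeFinset hA_indep) 1
  have h_large : #{v ∈ A | ¬T.degree v ≤ 4} * 5 ≤ ∑ v ∈ A, T.degree v :=
    (card_nsmul_le_sum _ (fun v ↦ T.degree v) 5 fun v hv ↦ not_le.1 (mem_filter.1 hv).2).trans
      (sum_le_sum_of_subset (filter_subset _ _))
  have h_split := card_filter_add_card_filter_not (s := A) (T.degree · ≤ 4)
  obtain ⟨L, hL, hLq⟩ := exists_subset_card_eq (show q ≤ #{v ∈ A | T.degree v ≤ 4} by omega)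
  have hLA := hL.trans (filter_subset _ _)
  refine ⟨L, disjoint_of_subset_left (hLA.trans hAE) disjoint_compl_left, hLq,
    hA_indep.mono (mod_cast hLA), (card_setNbhd_le L).trans ?_⟩
  rw [← hLq, mul_comm, ← smul_eq_mul]
  exact sum_le_card_nsmul _ _ _ fun v hv ↦ (mem_filter.1 (hL hv)).2

end Trees

section RootedTrees

variable {V W : Type*} {T : SimpleGraph V} {r : V} {H : SimpleGraph W}

/-- A choice of `r` as the root of the tree `T`: every other vertex `v` is joined to its parent
`par v`, which lies one level higher, and `T` has no further edges. The parent of the root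
itself is a junk value. -/
structure Rooting (T : SimpleGraph V) (r : V) where
  par : V → V
  depth : V → ℕ
  adj_par {v : V} : v ≠ r → T.Adj v (par v)
  depth_eq {v : V} : v ≠ r → depth v = depth (par v) + 1
  par_eq_or_par_eq {u v : V} : T.Adj u v → (u ≠ r ∧ par u = v) ∨ (v ≠ r ∧ par v = u)

lemma nonempty_rooting (hT : T.IsTree) (r : V) : Nonempty (Rooting T r) := by
  choose p hp h_unique using fun v ↦ hT.existsUnique_path v r
  have not_nil {v : V} (hv : v ≠ r) : ¬(p v).Nil := SimpleGraph.Walk.not_nil_of_ne hv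
  refine ⟨⟨fun v ↦ (p v).snd, fun v ↦ (p v).length, fun hv ↦ (p _).adj_snd (not_nil hv),
    fun {v} hv ↦ ?_, fun {u v} huv ↦ ?_⟩⟩
  · rw [← h_unique _ _ (hp v).tail, SimpleGraph.Walk.length_tail_add_one (not_nil hv)]
  · by_cases hv : v ∈ (p u).support
    · refine .inl ⟨?_, (hT.isAcyclic.eq_snd_of_adj_start (hp u) huv hv).symm⟩
      rintro rfl
      rw [← h_unique u .nil .nil] at hv
      simp at hv
      exact huv.ne hv.symm
    · refine .inr ⟨?_, ?_⟩
      · rintro rfl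
        exact hv (p u).end_mem_support
      · simp [← h_unique v _ ((hp u).cons (h := huv.symm) hv)]

namespace Rooting

variable (R : Rooting T r)

lemma contains_of_adj_par {f : V → W} (hf : Function.Injective f)
    (h_adj : ∀ v ≠ r, H.Adj (f v) (f (R.par v))) : Contains H T := by
  refine ⟨f, hf, fun u v huv ↦ ?_⟩
  obtain ⟨h, rfl⟩ | ⟨h, rfl⟩ := R.par_eq_or_par_eq huv
  · exact h_adj u h
  · exact (h_adj v h).symm

/-- A set of vertices that spans a subtree containing the root. -/
structure IsSubtree (C : Finset V) : Prop where
  root_mem : r ∈ C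
  par_mem {v : V} : v ∈ C → v ≠ r → R.par v ∈ C

/-- `f` embeds the subtree spanned by `C` into `H`; its values outside `C` are irrelevant. -/
structure IsPartialEmbedding (H : SimpleGraph W) (C : Finset V) (f : V → W) : Prop
    extends R.IsSubtree C where
  injOn : Set.InjOn f C
  adj {v : V} : v ∈ C → v ≠ r → H.Adj (f v) (f (R.par v))

variable {R} {C C' : Finset V} {Z : Finset W} {f : V → W} {v : V} {w : W}

lemma IsPartialEmbedding.update (hf : R.IsPartialEmbedding H C f) (hv : v ∉ C)
    (hpv : R.par v ∈ C) (hw : ∀ u ∈ C, f u ≠ w) (h_adj : H.Adj (f (R.par v)) w) :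
    R.IsPartialEmbedding H (insert v C) (Function.update f v w) := by
  have h_update {u : V} (hu : u ∈ C) : Function.update f v w u = f u :=
    Function.update_of_ne (ne_of_mem_of_not_mem hu hv) _ _
  refine ⟨⟨mem_insert_of_mem hf.root_mem, fun {u} hu hur ↦ ?_⟩, ?_, fun {u} hu hur ↦ ?_⟩
  · obtain rfl | hu := mem_insert.1 hu
    · exact mem_insert_of_mem hpv
    · exact mem_insert_of_mem (hf.par_mem hu hur)
  · rw [coe_insert, Set.injOn_insert (mod_cast hv)]
    refine ⟨hf.injOn.congr fun u hu ↦ (h_update hu).symm, ?_⟩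
    rintro ⟨u, hu, huw⟩
    rw [h_update hu, Function.update_self] at huw
    exact hw u hu huw
  · obtain rfl | hu := mem_insert.1 hu
    · rw [Function.update_self, h_update hpv]
      exact h_adj.symm
    · rw [h_update hu, h_update (hf.par_mem hu hur)]
      exact hf.adj hu hur

lemma IsPartialEmbedding.contains [Fintype V] (hf : R.IsPartialEmbedding H univ f) :
    Contains H T :=
  R.contains_of_adj_par (by simpa using hf.injOn) fun v ↦ hf.adj (mem_univ v)

lemma IsSubtree.exists_par_mem (hC : R.IsSubtree C) (hC' : R.IsSubtree C') (h : ¬C' ⊆ C) :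
    ∃ v ∈ C' \ C, v ≠ r ∧ R.par v ∈ C := by
  obtain ⟨v, hv, h_min⟩ := exists_min_image (C' \ C) R.depth (sdiff_nonempty.2 h)
  obtain ⟨hvC', hvC⟩ := mem_sdiff.1 hv
  have hvr : v ≠ r := fun h ↦ hvC (h ▸ hC.root_mem)
  refine ⟨v, hv, hvr, by_contra fun hpv ↦ ?_⟩
  have := h_min _ (mem_sdiff.2 ⟨hC'.par_mem hvC' hvr, hpv⟩)
  have := R.depth_eq hvr
  omega

lemma exists_adj_notMem_image {A : Finset V} {k : ℕ} (hA : #A < k)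
    (h_out : v ∉ A → k ≤ #(nbhd H (f v) Z)) (h_in : v ∈ A → k ≤ #(nbhd H (f v) Z) + 1) :
    ∃ w ∈ Z, H.Adj (f v) w ∧ w ∉ A.image f := by
  by_contra! h_sub
  have h_le : #(nbhd H (f v) Z) ≤ #(nbhd H (f v) (A.image f)) := card_le_card fun w hw ↦
    have hw := mem_nbhd.1 hw
    mem_nbhd.2 ⟨h_sub w hw.1 hw.2, hw.2⟩
  have h_image : #(A.image f) ≤ #A := card_image_le
  by_cases hv : v ∈ A
  · have := h_in hv
    have := card_nbhd_add_card_nbhd_compl_add_one (G := H) (mem_image_of_mem f hv)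
    omega
  · have := h_out hv
    have := h_le.trans (card_le_card nbhd_subset)
    omega

/-- Embed the missing vertices one at a time, parents first: when it is the turn of a vertex,
fewer than `#(C' \ C)` vertices of `Z` have been used. -/
lemma IsPartialEmbedding.exists_extend (hf : R.IsPartialEmbedding H C f) (hC' : R.IsSubtree C')
    (hCC' : C ⊆ C') (hZ : ∀ v ∈ C, f v ∉ Z)
    (h_old : ∀ v ∈ C' \ C, R.par v ∈ C → #(C' \ C) ≤ #(nbhd H (f (R.par v)) Z))
    (h_new : ∀ v ∈ C' \ C, R.par v ∉ C → ∀ w ∈ Z, #(C' \ C) ≤ #(nbhd H w Z) + 1) :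
    ∃ g, R.IsPartialEmbedding H C' g ∧ Set.EqOn g f C := by
  let P (D : Finset V) : Prop := C ⊆ D ∧ ∃ g, R.IsPartialEmbedding H D g ∧ Set.EqOn g f C ∧
    ∀ v ∈ D \ C, g v ∈ Z
  obtain ⟨D, hD, h_max⟩ := exists_max_image {D ∈ C'.powerset | P D} card
    ⟨C, mem_filter.2 ⟨mem_powerset.2 hCC', Subset.rfl, f, hf, fun _ _ ↦ rfl, by simp⟩⟩
  obtain ⟨hDC', hCD, g, hg, hgf, hgZ⟩ : D ⊆ C' ∧ P D := by simpa using hD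
  obtain rfl | hne := eq_or_ne D C'
  · exact ⟨g, hg, hgf⟩
  obtain ⟨v, hv, hvr, hpv⟩ :=
    hg.toIsSubtree.exists_par_mem hC' fun h ↦ hne (hDC'.antisymm h)
  obtain ⟨hvC', hvD⟩ := mem_sdiff.1 hv
  have hvC : v ∈ C' \ C := sdiff_subset_sdiff Subset.rfl hCD hv
  obtain ⟨w, hwZ, h_adj, hw⟩ : ∃ w ∈ Z, H.Adj (g (R.par v)) w ∧ w ∉ (D \ C).image g := by
    refine exists_adj_notMem_image
      (card_lt_card (sdiff_lt_sdiff_right (hDC'.lt_of_ne hne) hCD)) (fun h ↦ ?_) fun h ↦ ?_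
    · have hpvC : R.par v ∈ C := by simpa [hpv] using h
      exact hgf hpvC ▸ h_old v hvC hpvC
    · exact h_new v hvC (mem_sdiff.1 h).2 _ (hgZ _ h)
  have hgw (u : V) (hu : u ∈ D) : g u ≠ w := by
    rintro rfl
    by_cases huC : u ∈ C
    · exact hZ u huC (hgf huC ▸ hwZ)
    · exact hw (mem_image_of_mem g (mem_sdiff.2 ⟨hu, huC⟩))
  refine absurd (h_max (insert v D) ?_) (by simp [hvD])
  have h_update {u : V} (hu : u ∈ D) : Function.update g v w u = g u :=
    Function.update_of_ne (ne_of_mem_of_not_mem hu hvD) _ _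
  refine mem_filter.2 ⟨mem_powerset.2 (insert_subset hvC' hDC'),
    hCD.trans (subset_insert _ _), _, hg.update hvD hpv hgw h_adj,
    fun u hu ↦ (h_update (hCD hu)).trans (hgf hu), fun u hu ↦ ?_⟩
  obtain ⟨hu, huC⟩ := mem_sdiff.1 hu
  obtain rfl | hu := mem_insert.1 hu
  · rwa [Function.update_self]
  · exact h_update hu ▸ hgZ u (mem_sdiff.2 ⟨hu, huC⟩)

end Rooting

end RootedTrees

section Embedding

variable {V W : Type*} {T : SimpleGraph V} {G : SimpleGraph W}

lemma exists_injOn_union {A B : Finset V} {S S' : Finset W} {f g : V → W} (hAB : Disjoint A B)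
    (hS : Disjoint S S') (hf : Set.InjOn f A) (hg : Set.InjOn g B) (hfS : ∀ v ∈ A, f v ∈ S)
    (hgS' : ∀ v ∈ B, g v ∈ S') :
    ∃ h : V → W, Set.InjOn h (A ∪ B : Finset V) ∧ Set.EqOn h f A ∧ Set.EqOn h g B := by
  have h_left : Set.EqOn (fun v ↦ if v ∈ A then f v else g v) f A := fun v hv ↦ if_pos hv
  have h_right : Set.EqOn (fun v ↦ if v ∈ A then f v else g v) g B :=
    fun v hv ↦ if_neg (disjoint_right.1 hAB hv)
  refine ⟨_, coe_union A B ▸ (Set.injOn_union (mod_cast hAB)).2 ⟨hf.congr h_left.symm,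
    hg.congr h_right.symm, fun u hu v hv h ↦ ?_⟩, h_left, h_right⟩
  exact disjoint_iff_ne.1 hS _ (hfS u hu) _ (hgS' v hv)
    ((h_left hu).symm.trans (h.trans (h_right hv)))

lemma Rooting.card_nbhd_le_two {r : V} {R : Rooting T r} {L : Finset V}
    (hL : Set.InjOn R.par L) (v : V) : #(nbhd T v L) ≤ 2 := by
  have h_sub : nbhd T v L ⊆ insert (R.par v) {u ∈ L | R.par u = v} := fun u hu ↦ by
    obtain ⟨huL, hvu⟩ := mem_nbhd.1 hu
    obtain h | h := R.par_eq_or_par_eq hvu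
    · exact mem_insert.2 (.inl h.2.symm)
    · exact mem_insert_of_mem (mem_filter.2 ⟨huL, h.2⟩)
  have h_one : #{u ∈ L | R.par u = v} ≤ 1 := card_le_one.2 fun a ha b hb ↦ by
    rw [mem_filter] at ha hb
    exact hL ha.1 hb.1 (ha.2.trans hb.2.symm)
  have := (card_le_card h_sub).trans (card_insert_le _ _)
  omega

variable [Fintype V]

/-- Vertices are placed greedily, those of `P` first, then the neighbours of `L`, then those of
`M`: the later a vertex comes, the larger the part of `I` it may use. -/
lemma exists_injOn_placement [Nonempty W] {A P L M : Finset V} {I F K : Finset W} {g : V → W}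
    {s : ℕ} (hKI : K ⊆ I) (h_two : ∀ v, #(nbhd T v L) ≤ 2)
    (hg : ∀ y ∈ L, #(nbhd G (g y) I) ≤ s) (hP : #P ≤ #(K \ F))
    (hL : #P + #(setNbhd T L) + (2 * s + #F) ≤ #I)
    (hM : #P + #(setNbhd T L) + #(setNbhd T M) + #F ≤ #I) (hA : #A ≤ #I) :
    ∃ f : V → W, Set.InjOn f A ∧ (∀ v ∈ A, f v ∈ I) ∧ (∀ v ∈ A, v ∈ P → f v ∈ K) ∧
      (∀ v ∈ A, v ∈ setNbhd T M → f v ∉ F) ∧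
      ∀ v ∈ A, v ∉ P → ∀ y ∈ L, T.Adj y v → ¬G.Adj (g y) (f v) := by
  let bad (v : V) : Finset W := (nbhd T v L).biUnion fun y ↦ nbhd G (g y) I
  have h_bad (v : V) : #(bad v) ≤ 2 * s :=
    (card_biUnion_le_card_mul _ _ s fun y hy ↦ hg y (mem_nbhd.1 hy).1).trans
      (Nat.mul_le_mul_right s (h_two v))
  have h_IF : #I ≤ #(I \ F) + #F := Nat.sub_le_iff_le_add.1 (le_card_sdiff F I)
  let t (v : V) : Finset W := if v ∈ P then K \ F else
    if v ∈ setNbhd T L then (I \ F) \ bad v else if v ∈ setNbhd T M then I \ F else I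
  let rank (v : V) : ℕ :=
    if v ∈ P then 0 else if v ∈ setNbhd T L then 1 else if v ∈ setNbhd T M then 2 else 3
  have h_rank (v : V) : #{u ∈ A | rank u ≤ rank v} ≤ #(t v) := by
    simp only [t, rank]
    split_ifs with hvP hvL hvM
    · exact (card_le_card fun u hu ↦ by grind).trans hP
    · refine (card_le_card (t := P ∪ setNbhd T L) fun u hu ↦ by grind).trans ?_
      have := card_union_le P (setNbhd T L)
      have := le_card_sdiff (bad v) (I \ F)
      have := h_bad v
      omega
    · refine (card_le_card (t := P ∪ setNbhd T L ∪ setNbhd T M) fun u hu ↦ by grind).trans ?_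
      have := card_union_le (P ∪ setNbhd T L) (setNbhd T M)
      have := card_union_le P (setNbhd T L)
      omega
    · exact (card_filter_le _ _).trans hA
  obtain ⟨f, hf, hft⟩ := exists_injOn_mem A t rank fun v _ ↦ h_rank v
  refine ⟨f, hf, fun v hv ↦ ?_, fun v hv hvP ↦ ?_, fun v hv hvM ↦ ?_,
    fun v hv hvP y hy hyv hG ↦ ?_⟩ <;> replace hft := hft v hv <;> simp only [t] at hft
  · split_ifs at hft <;> grind
  · rw [if_pos hvP] at hft
    exact (mem_sdiff.1 hft).1
  · rw [if_pos hvM] at hft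
    split_ifs at hft <;> grind
  · rw [if_neg hvP, if_pos (mem_setNbhd.2 ⟨y, hy, hyv⟩), mem_sdiff, mem_sdiff] at hft
    exact hft.2 (mem_biUnion.2 ⟨y, mem_nbhd.2 ⟨hy, hyv.symm⟩, mem_nbhd.2 ⟨hft.1.1, hG⟩⟩)

lemma isIndepSet_union {A B : Finset V} (hA : T.IsIndepSet (A : Set V))
    (hB : T.IsIndepSet (B : Set V)) (hAB : Disjoint A (setNbhd T B)) :
    T.IsIndepSet ((A ∪ B : Finset V) : Set V) := by
  have h_cross {u v : V} (hu : u ∈ A) (hv : v ∈ B) : ¬T.Adj v u := fun h ↦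
    disjoint_left.1 hAB hu (mem_setNbhd.2 ⟨v, hv, h⟩)
  intro u hu v hv _ huv
  rw [coe_union] at hu hv
  obtain hu | hu := hu <;> obtain hv | hv := hv
  · exact hA hu hv huv.ne huv
  · exact h_cross hu hv huv.symm
  · exact h_cross hv hu huv
  · exact hB hu hv huv.ne huv

/-- The tree side of the embedding. The set `D` is a union of branches that will be embedded
last, and `L` is a set of vertices, far from the attachment points `D.image par` of these
branches, in which every vertex of the tree has at most one child. -/
structure Rooting.IsSplit {r : V} (R : Rooting T r) (D L : Finset V) : Prop where
  root_notMem : r ∉ D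
  mem_of_par_mem {v : V} : v ≠ r → R.par v ∈ D → v ∈ D
  disjoint : Disjoint L D
  disjoint_image_par : Disjoint L (D.image R.par)
  disjoint_setNbhd : Disjoint (setNbhd T L) (D.image R.par)
  isIndepSet : T.IsIndepSet (L : Set V)
  injOn_par : Set.InjOn R.par L

/-- The host side of the embedding: most of the tree goes into the independent set `I`, while
the vertices of `X` and `Y` are used to make up for what `I` is missing. The neighbours of the
vertices placed on `X` have to avoid the exceptional set `F`. -/
structure HostParts (G : SimpleGraph W) (q : ℕ) (I X Y F : Finset W) : Prop where
  disjoint_IX : Disjoint I X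
  disjoint_IY : Disjoint I Y
  disjoint_XY : Disjoint X Y
  isIndepSet : G.IsIndepSet (I : Set W)
  not_adj : ∀ x ∈ X, ∀ a ∈ I \ F, ¬G.Adj x a
  card_nbhd_le : ∀ y ∈ Y, #(nbhd G y I) ≤ 2 * q
  card_X_le : #X ≤ q
  le_card_I : 6 * q + #F ≤ #I

namespace Rooting

variable {r : V} {R : Rooting T r} {D L L' : Finset V}

lemma IsSplit.mono (h : R.IsSplit D L) (hL : L' ⊆ L) : R.IsSplit D L' where
  root_notMem := h.root_notMem
  mem_of_par_mem := h.mem_of_par_mem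
  disjoint := disjoint_of_subset_left hL h.disjoint
  disjoint_image_par := disjoint_of_subset_left hL h.disjoint_image_par
  disjoint_setNbhd := disjoint_of_subset_left (setNbhd_mono hL) h.disjoint_setNbhd
  isIndepSet := h.isIndepSet.mono (mod_cast hL)
  injOn_par := h.injOn_par.mono (mod_cast hL)

lemma IsSplit.isSubtree_compl (h : R.IsSplit D L) : R.IsSubtree Dᶜ where
  root_mem := mem_compl.2 h.root_notMem
  par_mem hv hvr := mem_compl.2 fun hpv ↦ mem_compl.1 hv (h.mem_of_par_mem hvr hpv)

end Rooting

section HostParts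

variable {q : ℕ} {I X Y F K U : Finset W} {r : V} {R : Rooting T r}
  {D L M : Finset V}

lemma HostParts.exists_placement [Nonempty W] (hH : HostParts G q I X Y F)
    (hS : R.IsSplit D L) (hKI : K ⊆ I)
    (hMD : Disjoint M D) (hML : Disjoint M L) (hMX : #M = #X) (hLY : #L = #Y)
    (hDL : #D + #(setNbhd T L) ≤ 2 * q) (hM : #(setNbhd T M) ≤ 4 * q) (hK : #D ≤ #(K \ F))
    (hV : Fintype.card V ≤ #I + #X + #Y + #D) :
    ∃ f : V → W, Set.InjOn f (Dᶜ : Finset V) ∧ (∀ v ∈ M, f v ∈ X) ∧ (∀ v ∈ L, f v ∈ Y) ∧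
      ∀ v ∉ D ∪ (M ∪ L), f v ∈ I ∧ (v ∈ D.image R.par → f v ∈ K) ∧
        (v ∈ setNbhd T M → f v ∉ F) ∧ ∀ y ∈ L, T.Adj y v → ¬G.Adj (f y) (f v) := by
  have h_compl := card_compl_add_card (D ∪ (M ∪ L))
  rw [card_union_of_disjoint (disjoint_union_right.2 ⟨hMD.symm, hS.disjoint.symm⟩),
    card_union_of_disjoint hML] at h_compl
  have hDc : Dᶜ = (M ∪ L) ∪ (D ∪ (M ∪ L))ᶜ := by
    rw [compl_union, union_inter_distrib_left, union_compl, inter_univ, eq_comm, union_eq_right]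
    exact subset_compl_iff_disjoint_right.2 (disjoint_union_left.2 ⟨hMD, hS.disjoint⟩)
  have hP : #(D.image R.par) ≤ #D := card_image_le
  have h_le := hH.le_card_I
  obtain ⟨gX, hgX, hgXX⟩ := exists_injOn_mem M (fun _ ↦ X) 0 (by simp [hMX])
  obtain ⟨gY, hgY, hgYY⟩ := exists_injOn_mem L (fun _ ↦ Y) 0 (by simp [hLY])
  obtain ⟨g, hg, hg_X, hg_Y⟩ := exists_injOn_union hML hH.disjoint_XY hgX hgY hgXX hgYY
  have hgX' (v : V) (hv : v ∈ M) : g v ∈ X := (hg_X hv).symm ▸ hgXX v hv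
  have hgY' (v : V) (hv : v ∈ L) : g v ∈ Y := (hg_Y hv).symm ▸ hgYY v hv
  obtain ⟨f, hf, hfI, hfK, hfF, hfY⟩ := exists_injOn_placement (A := (D ∪ (M ∪ L))ᶜ)
    (P := D.image R.par) (M := M) (g := g) hKI (R.card_nbhd_le_two hS.injOn_par)
    (fun y hy ↦ hH.card_nbhd_le _ (hgY' y hy)) (hP.trans hK)
    (by omega) (by omega) (by omega)
  obtain ⟨h, hh, hhg, hhf⟩ := exists_injOn_union
    (disjoint_compl_right.mono_left subset_union_right)
    (disjoint_union_left.2 ⟨hH.disjoint_IX.symm, hH.disjoint_IY.symm⟩) hg hf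
    (fun v hv ↦ (mem_union.1 hv).elim (fun hv ↦ mem_union_left _ (hgX' v hv))
      fun hv ↦ mem_union_right _ (hgY' v hv)) hfI
  have hhM {v : V} (hv : v ∈ M) : h v = g v := hhg (mem_union_left _ hv)
  have hhL {v : V} (hv : v ∈ L) : h v = g v := hhg (mem_union_right _ hv)
  refine ⟨h, by rwa [hDc], fun v hv ↦ hhM hv ▸ hgX' v hv,
    fun v hv ↦ hhL hv ▸ hgY' v hv, fun v hv ↦ ?_⟩
  have hv := mem_compl.2 hv
  rw [hhf hv]
  refine ⟨hfI v hv, hfK v hv, hfF v hv, fun y hy hyv ↦ hhL hy ▸ hfY v hv (fun hvP ↦ ?_) y hy hyv⟩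
  exact disjoint_left.1 hS.disjoint_setNbhd (mem_setNbhd.2 ⟨y, hy, hyv⟩) hvP

lemma HostParts.isPartialEmbedding {f : V → W} (hH : HostParts G q I X Y F)
    (hS : R.IsSplit D L) (hM : T.IsIndepSet (M : Set V)) (hML : Disjoint M (setNbhd T L))
    (hf : Set.InjOn f (Dᶜ : Finset V)) (hfM : ∀ v ∈ M, f v ∈ X)
    (hfI : ∀ v ∉ D ∪ (M ∪ L), f v ∈ I ∧ (v ∈ setNbhd T M → f v ∉ F) ∧
      ∀ y ∈ L, T.Adj y v → ¬G.Adj (f y) (f v)) :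
    R.IsPartialEmbedding Gᶜ Dᶜ f := by
  have h_indep := isIndepSet_union hM hS.isIndepSet hML
  have h_ML {u v : V} (hu : u ∈ M ∪ L) (hv : v ∉ D) (huv : T.Adj u v) : ¬G.Adj (f u) (f v) := by
    have hv' : v ∉ M ∪ L := fun hv ↦ not_adj_of_isIndepSet h_indep hu hv huv
    obtain ⟨hvI, hvF, hvY⟩ := hfI v (by simp only [mem_union] at *; tauto)
    obtain hu | hu := mem_union.1 hu
    · exact hH.not_adj _ (hfM u hu) _ (mem_sdiff.2 ⟨hvI, hvF (mem_setNbhd.2 ⟨u, hu, huv⟩)⟩)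
    · exact hvY u hu huv
  refine ⟨hS.isSubtree_compl, hf, fun {v} hv hvr ↦ ?_⟩
  have h_adj := R.adj_par hvr
  have hpv := hS.isSubtree_compl.par_mem hv hvr
  refine ⟨fun h ↦ h_adj.ne (hf hv hpv h), ?_⟩
  rw [mem_compl] at hv hpv
  by_cases hvML : v ∈ M ∪ L
  · exact h_ML hvML hpv h_adj
  by_cases hpML : R.par v ∈ M ∪ L
  · exact fun h ↦ h_ML hpML hv h_adj.symm h.symm
  · exact not_adj_of_isIndepSet hH.isIndepSet
      (hfI v fun h ↦ (mem_union.1 h).elim hv hvML).1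
      (hfI _ fun h ↦ (mem_union.1 h).elim hpv hpML).1

lemma HostParts.exists_isPartialEmbedding [Nonempty W] (hH : HostParts G q I X Y F)
    (hT : T.IsTree) (hn : 9 * q + 1 ≤ Fintype.card V) (hS : R.IsSplit D L) (hq : #D + #L ≤ q)
    (hDL : #D + #(setNbhd T L) ≤ 2 * q) (hLY : #Y ≤ #L)
    (hV : Fintype.card V ≤ #I + #X + #Y + #D) (hKI : K ⊆ I) (hK : #D ≤ #(K \ F)) :
    ∃ f, R.IsPartialEmbedding Gᶜ Dᶜ f ∧ (∀ v ∉ D, f v ∈ I ∪ (X ∪ Y)) ∧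
      ∀ v ∈ D, R.par v ∉ D → f (R.par v) ∈ K := by
  obtain ⟨L', hL', hL'Y⟩ := exists_subset_card_eq hLY
  replace hS := hS.mono hL'
  have hDL' := Nat.add_le_add_left (card_le_card (setNbhd_mono (T := T) hL')) #D
  let P := D.image R.par
  have hP : #P ≤ #D := card_image_le
  have hE : #(D ∪ P ∪ (L' ∪ setNbhd T L')) ≤ 3 * q := by
    have := card_union_le (D ∪ P) (L' ∪ setNbhd T L')
    have := card_union_le D P
    have := card_union_le L' (setNbhd T L')
    omega
  obtain ⟨M, hME, hMq, hM, hMN⟩ := exists_isIndepSet_card_setNbhd_le hT hn hE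
  obtain ⟨M', hM', hM'X⟩ := exists_subset_card_eq (hH.card_X_le.trans hMq.ge)
  obtain ⟨⟨hMD, hMP⟩, hML, hMN'⟩ := by
    simpa only [disjoint_union_right] using disjoint_of_subset_left hM' hME
  obtain ⟨f, hf, hfX, hfY, hfI⟩ := hH.exists_placement hS hKI hMD hML hM'X hL'Y
    (hDL'.trans hDL) ((card_le_card (setNbhd_mono hM')).trans hMN) hK hV
  refine ⟨f, hH.isPartialEmbedding hS (hM.mono (mod_cast hM')) hMN' hf hfX
    fun v hv ↦ ⟨(hfI v hv).1, (hfI v hv).2.2⟩, fun v hv ↦ ?_, fun v hv hpv ↦ ?_⟩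
  · by_cases hvM : v ∈ M'
    · exact mem_union_right _ (mem_union_left _ (hfX v hvM))
    by_cases hvL : v ∈ L'
    · exact mem_union_right _ (mem_union_right _ (hfY v hvL))
    · exact mem_union_left _ (hfI v (by simp only [mem_union]; tauto)).1
  · have hvP := mem_image_of_mem R.par hv
    have := disjoint_right.1 hMP hvP
    have := disjoint_right.1 hS.disjoint_image_par hvP
    exact (hfI _ (by simp only [mem_union]; tauto)).2.1 hvP

lemma HostParts.contains_compl [Nonempty W] (hH : HostParts G q I X Y F) (hT : T.IsTree)
    (hn : 9 * q + 1 ≤ Fintype.card V) (hS : R.IsSplit D L) (hq : #D + #L ≤ q)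
    (hDL : #D + #(setNbhd T L) ≤ 2 * q) (hLY : #Y ≤ #L)
    (hV : Fintype.card V ≤ #I + #X + #Y + #D) (hKI : K ⊆ I) (hK : #D ≤ #(K \ F))
    (hU : Disjoint U (I ∪ (X ∪ Y))) (hKU : ∀ w ∈ K ∪ U, #D ≤ #(nbhd Gᶜ w U)) :
    Contains Gᶜ T := by
  obtain ⟨f, hf, hf_mem, hfK⟩ := hH.exists_isPartialEmbedding hT hn hS hq hDL hLY hV hKI hK
  have hD : univ \ Dᶜ = D := by simp
  obtain ⟨g, hg, -⟩ := hf.exists_extend (C' := univ) (Z := U)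
    ⟨mem_univ r, fun _ _ ↦ mem_univ _⟩ (subset_univ _)
    (fun v hv ↦ disjoint_right.1 hU (hf_mem v (mem_compl.1 hv)))
    (fun v hv hpv ↦ hD.symm ▸ hKU _ (mem_union_left _ (hfK v (hD ▸ hv) (mem_compl.1 hpv))))
    fun v _ _ w hw ↦ hD.symm ▸ (hKU w (mem_union_right _ hw)).trans (Nat.le_succ _)
  exact hg.contains

lemma HostParts.contains_compl_of_empty [Nonempty W] (hH : HostParts G q I X Y F)
    (hT : T.IsTree) (hn : 9 * q + 1 ≤ Fintype.card V) (hS : R.IsSplit ∅ L) (hq : #L ≤ q)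
    (hL : #(setNbhd T L) ≤ 2 * q) (hLY : #Y ≤ #L) (hV : Fintype.card V ≤ #I + #X + #Y) :
    Contains Gᶜ T :=
  hH.contains_compl (K := ∅) (U := ∅) hT hn hS (by simpa) (by simpa) hLY (by simpa)
    (empty_subset I) (by simp) (disjoint_empty_left _) (by simp)

end HostParts

end Embedding

section Splitting

lemma exists_subset_disjoint_image {α β : Type*} {S : Finset α} {f : α → β} {k q : ℕ}
    (hkS : k ≤ #S) (hkq : k ≤ q) :
    ∃ D ⊆ S, ∃ Q ⊆ S, Set.InjOn f Q ∧ Disjoint (Q.image f) (D.image f) ∧ #D = k ∧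
      #D + #Q = max k (min q #(S.image f)) := by
  obtain ⟨M, hMS, hM_inj, hM⟩ :=
    exists_subset_injOn_image_eq_of_surjOn (f := f) (S : Set α) (S.image f)
      (by simpa using Set.surjOn_image f S)
  rw [coe_subset] at hMS
  rw [← hM, card_image_of_injOn hM_inj]
  obtain hk | hk := le_or_gt k #M
  · obtain ⟨D, hD, rfl⟩ := exists_subset_card_eq hk
    obtain ⟨Q, hQ, hQq⟩ := exists_subset_card_eq (show min q #M - #D ≤ #(M \ D) by
      rw [card_sdiff_of_subset hD]; omega)
    have hQM := hQ.trans sdiff_subset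
    refine ⟨D, hD.trans hMS, Q, hQM.trans hMS, hM_inj.mono (mod_cast hQM),
      disjoint_left.2 fun w hwQ hwD ↦ ?_, rfl, by omega⟩
    obtain ⟨u, hu, rfl⟩ := mem_image.1 hwQ
    obtain ⟨v, hv, hvu⟩ := mem_image.1 hwD
    exact (mem_sdiff.1 (hQ hu)).2 (hM_inj (hD hv) (hQM hu) hvu ▸ hv)
  · obtain ⟨D, -, hDS, rfl⟩ := exists_subsuperset_card_eq hMS hk.le hkS
    exact ⟨D, hDS, ∅, by simp; omega⟩

variable {V : Type*} [Fintype V] {T : SimpleGraph V} {r : V}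

namespace Rooting

/-- The set of children of `v`, i.e. its neighbours other than its parent. -/
noncomputable def children (R : Rooting T r) (v : V) : Finset V := {u | u ≠ r ∧ R.par u = v}

/-- The leaves of the rooted tree, i.e. its childless vertices. The root is not a leaf, even if it
has degree one. -/
noncomputable def leaves (R : Rooting T r) : Finset V := {v | R.children v = ∅}

variable {R : Rooting T r} {u v : V} {D L Q C : Finset V} {k q : ℕ}

lemma mem_children : u ∈ R.children v ↔ u ≠ r ∧ R.par u = v := by simp [children]

lemma notMem_leaves : v ∉ R.leaves ↔ ∃ u ≠ r, R.par u = v := by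
  simp [leaves, ← nonempty_iff_ne_empty, Finset.Nonempty, mem_children]

lemma par_notMem_leaves (hv : v ≠ r) : R.par v ∉ R.leaves := notMem_leaves.2 ⟨v, hv, rfl⟩

lemma root_notMem_leaves [Nontrivial V] : r ∉ R.leaves := by
  obtain ⟨v, hv⟩ := exists_ne r
  have h_root : R.IsSubtree {r} := ⟨mem_singleton_self r, by simp⟩
  have h_univ : R.IsSubtree univ := ⟨mem_univ r, by simp⟩
  obtain ⟨u, -, hur, hu⟩ := h_root.exists_par_mem h_univ fun h ↦ by simpa [hv] using h (mem_univ v)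
  exact notMem_leaves.2 ⟨u, hur, mem_singleton.1 hu⟩

lemma par_eq_of_mem_leaves (hu : u ∈ R.leaves) (huv : T.Adj u v) : R.par u = v := by
  obtain h | ⟨hv, rfl⟩ := R.par_eq_or_par_eq huv
  · exact h.2
  · exact absurd hu (par_notMem_leaves hv)

lemma sum_card_children (Q : Finset V) :
    ∑ v ∈ Q, #(R.children v) = #{u | u ≠ r ∧ R.par u ∈ Q} := by
  simpa [children, filter_filter] using
    sum_card_fiberwise_eq_card_filter ({u | u ≠ r} : Finset V) Q R.par

lemma sum_card_children_lt (Q : Finset V) : ∑ v ∈ Q, #(R.children v) < #Q + #R.leaves := by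
  have h_univ : ∑ v, #(R.children v) + 1 = Fintype.card V := by
    simpa [sum_card_children, filter_ne', card_univ] using
      Nat.sub_add_cancel (Fintype.card_pos_iff.2 ⟨r⟩)
  have h_compl : #(Qᶜ \ R.leaves) ≤ ∑ v ∈ Qᶜ, #(R.children v) := by
    rw [card_eq_sum_ones]
    refine (sum_le_sum fun v hv ↦ ?_).trans (sum_le_sum_of_subset sdiff_subset)
    obtain ⟨u, hu⟩ := notMem_leaves.1 (mem_sdiff.1 hv).2
    exact card_pos.2 ⟨u, mem_children.2 hu⟩
  have := sum_add_sum_compl Q fun v ↦ #(R.children v)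
  have := le_card_sdiff R.leaves Qᶜ
  have := card_compl_add_card Q
  omega

lemma card_setNbhd_le_sum_card_children (Q : Finset V) :
    #(setNbhd T Q) ≤ ∑ v ∈ Q, #(R.children v) + #Q := by
  have h_degree (v : V) : T.degree v ≤ #(R.children v) + 1 := by
    refine (card_le_card fun u hu ↦ ?_).trans (card_insert_le (R.par v) _)
    rw [T.mem_neighborFinset] at hu
    obtain h | h := R.par_eq_or_par_eq hu
    · exact mem_insert.2 (.inl h.2.symm)
    · exact mem_insert_of_mem (mem_children.2 h)
  calc #(setNbhd T Q) ≤ ∑ v ∈ Q, T.degree v := card_setNbhd_le Q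
    _ ≤ ∑ v ∈ Q, (#(R.children v) + 1) := sum_le_sum fun v _ ↦ h_degree v
    _ = _ := by simp [sum_add_distrib]

lemma card_setNbhd_lt (R : Rooting T r) (Q : Finset V) :
    #(setNbhd T Q) < 2 * #Q + #R.leaves := by
  have := card_setNbhd_le_sum_card_children (R := R) Q
  have := sum_card_children_lt (R := R) Q
  omega

/-- Add the vertices in order of decreasing depth. -/
lemma exists_card_eq_and_mem_of_par_mem (R : Rooting T r) (hk : k < Fintype.card V) :
    ∃ D : Finset V, #D = k ∧ r ∉ D ∧ ∀ v ≠ r, R.par v ∈ D → v ∈ D := by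
  induction k with
  | zero => exact ⟨∅, by simp⟩
  | succ k ih =>
    obtain ⟨D, rfl, hr, hD⟩ := ih (by omega)
    have h_compl := card_compl_add_card D
    have h_nonempty : (Dᶜ.erase r).Nonempty := by
      rw [← card_pos, card_erase_of_mem (mem_compl.2 hr)]
      omega
    obtain ⟨v, hv, h_max⟩ := exists_max_image _ R.depth h_nonempty
    obtain ⟨hvr, hvD⟩ : v ≠ r ∧ v ∉ D := by simpa using hv
    refine ⟨insert v D, card_insert_of_notMem hvD, by simp [hvr.symm, hr], fun u hu hpu ↦ ?_⟩
    obtain hpu | hpu := mem_insert.1 hpu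
    · by_contra hu'
      have := h_max u (by simp_all)
      have := R.depth_eq hu
      rw [hpu] at this
      omega
    · exact mem_insert_of_mem (hD u hu hpu)

lemma exists_injOn_par_image_eq (hQ : Disjoint Q R.leaves) :
    ∃ B : Finset V, r ∉ B ∧ Set.InjOn R.par B ∧ B.image R.par = Q := by
  have h_surj : Set.SurjOn R.par {r}ᶜ Q := fun v hv ↦
    notMem_leaves.1 (disjoint_left.1 hQ hv)
  obtain ⟨B, hB, h_inj, h_image⟩ := exists_subset_injOn_image_eq_of_surjOn _ _ h_surj
  exact ⟨B, fun h ↦ hB h rfl, h_inj, h_image⟩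

/-- The tree has a splitting of total size `q` whose branches have `k` vertices altogether, and
whose set `L` has few neighbours. -/
def HasSplit (R : Rooting T r) (k q : ℕ) : Prop :=
  ∃ D L, R.IsSplit D L ∧ #D = k ∧ #D + #L = q ∧ #D + #(setNbhd T L) ≤ 2 * q

lemma hasSplit_of_card_leaves_lt (hT : T.IsTree) (hn : 9 * q + 1 ≤ Fintype.card V)
    (hk : k ≤ q) (h_leaves : #R.leaves < k) :
    R.HasSplit k q := by
  obtain ⟨D, rfl, hrD, hD⟩ := R.exists_card_eq_and_mem_of_par_mem (k := k) (by omega)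
  obtain ⟨B, -, hB_inj, hB⟩ := exists_injOn_par_image_eq (disjoint_compl_left (a := R.leaves))
  have h_card_B : #B + #R.leaves = Fintype.card V := by
    rw [← card_image_of_injOn hB_inj, hB, card_compl_add_card]
  let P := D.image R.par
  have h_forbidden : #(D ∪ P ∪ setNbhd T P) < 4 * #D + #R.leaves := by
    have : #P ≤ #D := card_image_le
    have := R.card_setNbhd_lt P
    have := card_union_le (D ∪ P) (setNbhd T P)
    have := card_union_le D P
    omega
  have h_sdiff := le_card_sdiff (D ∪ P ∪ setNbhd T P) B
  obtain ⟨L, hL, h_card_L, hL_indep⟩ := exists_isIndepSet_of_colorable hT.colorable_two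
    (A := B \ (D ∪ P ∪ setNbhd T P)) (q := q - #D) (by omega)
  have h_avoid : ∀ u ∈ L, u ∉ D ∧ u ∉ P ∧ u ∉ setNbhd T P := by grind
  refine ⟨D, L, ⟨hrD, fun hv ↦ hD _ hv, disjoint_left.2 fun u hu ↦ (h_avoid u hu).1,
    disjoint_left.2 fun u hu ↦ (h_avoid u hu).2.1, disjoint_left.2 fun v hv hvP ↦ ?_, hL_indep,
    hB_inj.mono (mod_cast hL.trans sdiff_subset)⟩, rfl, by omega, ?_⟩
  · obtain ⟨u, hu, huv⟩ := mem_setNbhd.1 hv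
    exact (h_avoid u hu).2.2 (mem_setNbhd.2 ⟨v, hvP, huv.symm⟩)
  · have := R.card_setNbhd_lt L
    omega

lemma isSplit_union_of_subset_leaves [Nontrivial V] (hD : D ⊆ R.leaves) (hQ : Q ⊆ R.leaves)
    (hQ_inj : Set.InjOn R.par Q) (hQD : Disjoint (Q.image R.par) (D.image R.par)) (hrC : r ∉ C)
    (hC : Disjoint (C ∪ setNbhd T C) (R.leaves.image R.par)) (hC_inj : Set.InjOn R.par C)
    (hC_indep : T.IsIndepSet (C : Set V)) :
    R.IsSplit D (Q ∪ C) ∧ Disjoint Q C ∧ setNbhd T (Q ∪ C) ⊆ Q.image R.par ∪ setNbhd T C := by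
  have ne_root {u : V} (hu : u ∈ R.leaves) : u ≠ r := ne_of_mem_of_not_mem hu root_notMem_leaves
  have par_mem_setNbhd {u : V} (hu : u ∈ C) : R.par u ∈ setNbhd T C :=
    mem_setNbhd.2 ⟨u, hu, R.adj_par (ne_of_mem_of_not_mem hu hrC)⟩
  rw [disjoint_union_left] at hC
  have h_leaves : Disjoint R.leaves C := disjoint_left.2 fun u hu huC ↦
    disjoint_left.1 hC.2 (par_mem_setNbhd huC) (mem_image_of_mem _ hu)
  have h_par : Disjoint R.leaves (R.leaves.image R.par) := disjoint_right.2 fun u hu ↦ by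
    obtain ⟨v, hv, rfl⟩ := mem_image.1 hu
    exact par_notMem_leaves (ne_root hv)
  have h_setNbhd : setNbhd T Q ⊆ Q.image R.par := fun v hv ↦ by
    obtain ⟨u, hu, huv⟩ := mem_setNbhd.1 hv
    exact mem_image.2 ⟨u, hu, par_eq_of_mem_leaves (hQ hu) huv⟩
  have h_union : setNbhd T (Q ∪ C) ⊆ Q.image R.par ∪ setNbhd T C := by
    rw [setNbhd, union_biUnion]
    exact union_subset_union_left h_setNbhd
  have hPD := image_subset_image (f := R.par) hD
  have hPQ := image_subset_image (f := R.par) hQ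
  refine ⟨⟨fun h ↦ root_notMem_leaves (hD h), fun hv h ↦ absurd (hD h) (par_notMem_leaves hv),
    disjoint_union_left.2 ⟨?_, ?_⟩, disjoint_union_left.2 ⟨?_, ?_⟩, ?_, ?_, ?_⟩,
    disjoint_of_subset_left hQ h_leaves, h_union⟩
  · exact disjoint_left.2 fun u huQ huD ↦
      disjoint_left.1 hQD (mem_image_of_mem _ huQ) (mem_image_of_mem _ huD)
  · exact disjoint_of_subset_right hD h_leaves.symm
  · exact disjoint_of_subset_left hQ (disjoint_of_subset_right hPD h_par)
  · exact disjoint_of_subset_right hPD hC.1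
  · exact disjoint_of_subset_left h_union
      (disjoint_union_left.2 ⟨hQD, disjoint_of_subset_right hPD hC.2⟩)
  · rw [union_comm]
    refine isIndepSet_union hC_indep (fun u hu v hv _ huv ↦ ?_)
      (disjoint_of_subset_right (h_setNbhd.trans hPQ) hC.1)
    exact disjoint_right.1 h_par (hPQ (h_setNbhd (mem_setNbhd.2 ⟨u, hu, huv⟩))) (hQ hv)
  · rw [coe_union, Set.injOn_union (mod_cast disjoint_of_subset_left hQ h_leaves)]
    refine ⟨hQ_inj, hC_inj, fun u hu v hv huv ↦ disjoint_left.1 hC.2 (par_mem_setNbhd hv) ?_⟩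
    exact huv ▸ mem_image_of_mem _ (hQ hu)

lemma exists_isIndepSet_disjoint_image_par_leaves [Nontrivial V] (hT : T.IsTree) {j : ℕ}
    (hj : 2 * j + #R.leaves + 3 * #(R.leaves.image R.par) ≤ Fintype.card V + 1) :
    ∃ C : Finset V, #C = j ∧ r ∉ C ∧ Disjoint (C ∪ setNbhd T C) (R.leaves.image R.par) ∧
      Set.InjOn R.par C ∧ T.IsIndepSet (C : Set V) ∧
      #(setNbhd T C) < 2 * j + #(R.leaves.image R.par) := by
  set P := R.leaves.image R.par
  obtain ⟨B, hrB, hB_inj, hB⟩ := exists_injOn_par_image_eq (R := R) (Q := (R.leaves ∪ P)ᶜ)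
    (disjoint_left.2 fun u hu h ↦ mem_compl.1 hu (mem_union_left _ h))
  have h_card_B : Fintype.card V ≤ #B + #R.leaves + #P := by
    have := card_compl_add_card (R.leaves ∪ P)
    have := card_union_le R.leaves P
    rw [← card_image_of_injOn hB_inj, hB]
    omega
  have h_sdiff := le_card_sdiff (P ∪ P.image R.par) B
  have h_union := card_union_le P (P.image R.par)
  have h_image : #(P.image R.par) ≤ #P := card_image_le
  obtain ⟨C, hC, rfl, hC_indep⟩ := exists_isIndepSet_of_colorable hT.colorable_two
    (A := B \ (P ∪ P.image R.par)) (q := j) (by omega)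
  have hCB : C ⊆ B := hC.trans sdiff_subset
  have h_avoid : ∀ u ∈ C, u ∉ P ∧ u ∉ P.image R.par := by grind
  have h_disj : Disjoint C P := disjoint_left.2 fun u hu ↦ (h_avoid u hu).1
  refine ⟨C, rfl, fun h ↦ hrB (hCB h), disjoint_union_left.2 ⟨h_disj, ?_⟩,
    hB_inj.mono (mod_cast hCB), hC_indep, ?_⟩
  · refine disjoint_left.2 fun v hv hvP ↦ ?_
    obtain ⟨u, hu, huv⟩ := mem_setNbhd.1 hv
    obtain ⟨-, rfl⟩ | ⟨-, rfl⟩ := R.par_eq_or_par_eq huv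
    · have := hB ▸ mem_image_of_mem R.par (hCB hu)
      exact mem_compl.1 this (mem_union_right _ hvP)
    · exact (h_avoid _ hu).2 (mem_image_of_mem _ hvP)
  · have h_leaves : #R.leaves ≤ ∑ v ∈ P, #(R.children v) := by
      rw [sum_card_children]
      refine card_le_card fun u hu ↦ ?_
      simpa using ⟨ne_of_mem_of_not_mem hu root_notMem_leaves, mem_image_of_mem R.par hu⟩
    have h_sum := sum_card_children_lt (R := R) (C ∪ P)
    rw [sum_union h_disj, card_union_of_disjoint h_disj] at h_sum
    have := card_setNbhd_le_sum_card_children (R := R) C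
    omega

lemma hasSplit (hT : T.IsTree) (hn : 9 * q + 1 ≤ Fintype.card V)
    (hn' : q ^ 2 + q + 1 ≤ Fintype.card V) (h_few : ∀ c, #{u ∈ R.leaves | R.par u = c} < q)
    (hk : k ≤ q) : R.HasSplit k q := by
  obtain h_leaves | h_leaves := lt_or_ge #R.leaves k
  · exact hasSplit_of_card_leaves_lt hT hn hk h_leaves
  have hq : 0 < q := (Nat.zero_le _).trans_lt (h_few r)
  have : Nontrivial V := Fintype.one_lt_card_iff_nontrivial.1 (by omega)
  obtain ⟨D, hD, Q, hQ, hQ_inj, hQD, rfl, h_card⟩ :=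
    exists_subset_disjoint_image (f := R.par) h_leaves hk
  obtain ⟨C, h_card_C, hrC, hC, hC_inj, hC_indep, h_card_nbhd⟩ : ∃ C : Finset V,
      #C = q - (#D + #Q) ∧ r ∉ C ∧ Disjoint (C ∪ setNbhd T C) (R.leaves.image R.par) ∧
      Set.InjOn R.par C ∧ T.IsIndepSet (C : Set V) ∧ #D + #Q + #(setNbhd T C) ≤ 2 * q := by
    obtain h_done | h_rest := le_or_gt q (#D + #Q)
    · exact ⟨∅, by simp [setNbhd]; omega⟩
    have h_card_leaves : #R.leaves ≤ (q - 1) * #(R.leaves.image R.par) :=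
      card_le_mul_card_image _ _ fun c _ ↦ Nat.le_sub_one_of_lt (h_few c)
    obtain ⟨C, h_card_C, hrC, hC, hC_inj, hC_indep, h_lt⟩ :=
      exists_isIndepSet_disjoint_image_par_leaves (R := R) hT (j := q - (#D + #Q)) (by
        obtain ⟨p, rfl⟩ := Nat.exists_eq_add_of_le' hq
        have : p * #(R.leaves.image R.par) ≤ p * p := Nat.mul_le_mul_left p (by omega)
        rw [Nat.add_sub_cancel] at h_card_leaves
        ring_nf at *
        omega)
    exact ⟨C, h_card_C, hrC, hC, hC_inj, hC_indep, by omega⟩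
  obtain ⟨h_split, h_disj, h_sub⟩ :=
    isSplit_union_of_subset_leaves hD hQ hQ_inj hQD hrC hC hC_inj hC_indep
  have h_card_union := card_union_of_disjoint h_disj
  have h_image : #(Q.image R.par) ≤ #Q := card_image_le
  have h_nbhd := (card_le_card h_sub).trans (card_union_le _ _)
  exact ⟨D, Q ∪ C, h_split, rfl, by omega, by omega⟩

end Rooting

end Splitting

section Main

variable {V W : Type*} {T : SimpleGraph V} {G H : SimpleGraph W} {r : V} {R : Rooting T r} {q : ℕ}
  {S U I X Y Y' F : Finset W} {v : W}

lemma MatchingDecomp.hostParts (h : MatchingDecomp G S X Y I F) (hX : #X ≤ q) (hS : 9 * q ≤ #S)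
    (hIY : Disjoint I Y') (hXY : Disjoint X Y') (hY' : ∀ y ∈ Y', #(nbhd G y I) ≤ 2 * q) :
    HostParts G q I X Y' F where
  disjoint_IX := h.disjoint_XI.symm
  disjoint_IY := hIY
  disjoint_XY := hXY
  isIndepSet := h.isIndepSet
  not_adj := h.not_adj
  card_nbhd_le := hY'
  card_X_le := hX
  le_card_I := by
    have := h.card_F_le.trans (card_filter_le Y _)
    have := h.card_X_eq
    have := h.card_add_two_mul
    omega

lemma MatchingDecomp.card_F_le_of_forall_mem (h : MatchingDecomp G S X Y I F) (hX : #X ≤ q)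
    (hY' : ∀ w ∉ I, w ∉ X → #(nbhd G w I) ≤ 2 * q → w ∈ Y') : #F ≤ #Y' := by
  refine h.card_F_le.trans (card_le_card fun y hy ↦ ?_)
  obtain ⟨hyY, hy⟩ := mem_filter.1 hy
  have h_pos : 0 < #Y := card_pos.2 ⟨y, hyY⟩
  have := h.card_X_eq
  exact hY' y (disjoint_left.1 h.disjoint_YI hyY) (disjoint_right.1 h.disjoint_XY hyY) (by omega)

lemma card_nbhd_lt_of_not_contains_fan {A : Finset W} {k : ℕ} {u : W}
    (h_fan : ¬Contains G (fan (q + 1))) (hAU : Disjoint A U)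
    (hA : ∀ a ∈ A, #(nbhd Gᶜ a U) < k) (hu : q < #(nbhd G u A)) : #(nbhd G u U) < q + k := by
  by_contra! hk
  refine h_fan (contains_fan_of_le_card_nbhd_nbhd (A := nbhd G u A) (Z := U)
    (fun a ha ↦ (mem_nbhd.1 ha).2) hu (disjoint_of_subset_left nbhd_subset hAU) fun a ha ↦ ?_)
  have haA := nbhd_subset ha
  have := hA a haA
  have := card_nbhd_add_card_nbhd_compl (G := G) (disjoint_left.1 hAU haA)
  have := card_nbhd_add_card_nbhd_le (G := G) (u := a) (v := u) (Z := U)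
  omega

lemma MatchingDecomp.contains_compl [Fintype V] [Nonempty W]
    (h : MatchingDecomp G S X Y I F) (hX : #X ≤ q)
    (hS : #S = Fintype.card V) (hIY : Disjoint I Y') (hXY : Disjoint X Y')
    (hY' : ∀ y ∈ Y', #(nbhd G y I) ≤ 2 * q) (hXY' : #X ≤ #Y') (hT : T.IsTree)
    (hn : 9 * q + 1 ≤ Fintype.card V) (h_split : R.HasSplit 0 q) : Contains Gᶜ T := by
  obtain ⟨Z, hZY, hZ⟩ := exists_subset_card_eq hXY'
  obtain ⟨D, L, hDL, hD, hq, hN⟩ := h_split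
  obtain rfl := card_eq_zero.1 hD
  have h_host := h.hostParts hX (by omega) (disjoint_of_subset_right hZY hIY)
    (disjoint_of_subset_right hZY hXY) fun y hy ↦ hY' y (hZY hy)
  have := h.card_add_two_mul
  exact h_host.contains_compl_of_empty hT hn hDL (by omega) (by omega) (by omega) (by omega)

/-- `G[U]` has small degrees, so that the vertices of a decomposition of `N(a) ∩ U`, for any
`a ∈ A`, all have few neighbours in its independent part. -/
lemma contains_compl_of_card_nbhd_compl_lt [Fintype V] {A : Finset W} {k : ℕ}
    (h_fan : ¬Contains G (fan (q + 1))) (hT : T.IsTree) (hn : 9 * q + 1 ≤ Fintype.card V)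
    (h_split : R.HasSplit 0 q) (hAU : Disjoint A U) (hA : ∀ a ∈ A, #(nbhd Gᶜ a U) < k)
    (hU : ∀ u ∈ U, q < #(nbhd G u A)) (hk : k ≤ q) (hVU : Fintype.card V + k ≤ #U + 1)
    (hA' : A.Nonempty) : Contains Gᶜ T := by
  obtain ⟨a, ha⟩ := hA'
  have : Nonempty W := ⟨a⟩
  have h_le : Fintype.card V ≤ #(nbhd G a U) := by
    have := hA a ha
    have := card_nbhd_add_card_nbhd_compl (G := G) (disjoint_left.1 hAU ha)
    omega
  obtain ⟨S, hSa, hS, X, Y, I, F, h_dec, hX⟩ := exists_matchingDecomp_of_le_card_nbhd h_fan h_le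
  have hSU : S ⊆ U := hSa.trans nbhd_subset
  refine h_dec.contains_compl (Nat.lt_succ_iff.1 hX) hS h_dec.disjoint_YI.symm h_dec.disjoint_XY
    (fun y hy ↦ ?_) h_dec.card_X_eq.le hT hn h_split
  have hyU := hSU (h_dec.Y_subset hy)
  have := card_nbhd_lt_of_not_contains_fan h_fan hAU hA (hU y hyU)
  have := card_le_card (nbhd_mono (G := G) (v := y) (h_dec.I_subset.trans hSU))
  omega

variable [Fintype W]

lemma Rooting.IsSubtree.exists_isPartialEmbedding [DecidableRel H.Adj] {C : Finset V}
    (hC : R.IsSubtree C) (z : W) (hH : ∀ w, #C ≤ H.degree w + 1) :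
    ∃ f, R.IsPartialEmbedding H C f ∧ f r = z := by
  have h_root : R.IsPartialEmbedding H {r} fun _ ↦ z :=
    ⟨⟨mem_singleton_self r, by simp⟩, by simp, by simp⟩
  have h_card : #(C \ {r}) + 1 = #C := by
    rw [sdiff_singleton_eq_erase, card_erase_add_one hC.root_mem]
  have h_erase : nbhd H z (univ.erase z) = nbhd H z univ := by
    ext w
    simpa [mem_nbhd] using fun h ↦ h.ne'
  obtain ⟨f, hf, hfz⟩ := h_root.exists_extend (Z := univ.erase z) hC
    (singleton_subset_iff.2 hC.root_mem) (by simp)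
    (fun v _ _ ↦ by
      have := hH z
      rw [h_erase, card_nbhd_univ]
      omega)
    (fun v _ _ w _ ↦ by
      have := hH w
      have := card_nbhd_le_add_card_sdiff (G := H) (v := w) (Z := univ) (Z' := univ.erase z)
      rw [sdiff_erase_self (mem_univ z), card_singleton, card_nbhd_univ] at this
      omega)
  exact ⟨f, hf, hfz (mem_coe.2 (mem_singleton_self r))⟩

variable [Fintype V]

lemma contains_of_isTree_of_card_le_degree [Nonempty W] [DecidableRel H.Adj]
    (hT : T.IsTree) (hH : ∀ w, Fintype.card V ≤ H.degree w + 1) : Contains H T := by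
  obtain ⟨r⟩ := hT.connected.nonempty
  obtain ⟨R⟩ := nonempty_rooting hT r
  have h_univ : R.IsSubtree univ := ⟨mem_univ r, fun _ _ ↦ mem_univ _⟩
  obtain ⟨f, hf, -⟩ := h_univ.exists_isPartialEmbedding (Classical.arbitrary W) hH
  exact hf.contains

/-- Place `c` on the vertex `z`, and embed the pendant vertices adjacent to `c` last. -/
lemma contains_compl_of_card_pendant_ge (hT : T.IsTree) {c : V} {L : Finset V} (hL : q ≤ #L)
    (hLc : ∀ u ∈ L, ∀ v, T.Adj u v ↔ v = c) (hW : Fintype.card W + 1 = 2 * Fintype.card V)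
    (h_degree : ∀ w, G.degree w < Fintype.card V + q) {z : W} (hz : G.degree z < Fintype.card V) :
    Contains Gᶜ T := by
  obtain ⟨R⟩ := nonempty_rooting hT c
  have hcL : c ∉ L := fun h ↦ T.irrefl ((hLc c h c).2 rfl)
  have par_eq {u : V} (hu : u ∈ L) : R.par u = c :=
    (hLc u hu _).1 (R.adj_par (ne_of_mem_of_not_mem hu hcL))
  have h_par {v : V} (hv : v ≠ c) : R.par v ∉ L := fun h ↦
    hv ((hLc _ h v).1 (R.adj_par hv).symm)
  have h_card := card_compl_add_card L
  have h_subtree : R.IsSubtree Lᶜ := ⟨mem_compl.2 hcL, fun _ hv ↦ mem_compl.2 (h_par hv)⟩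
  obtain ⟨f, hf, rfl⟩ := h_subtree.exists_isPartialEmbedding (H := Gᶜ) z fun w ↦ by
    have := degree_add_degree_compl (G := G) w
    have := h_degree w
    omega
  let A := Lᶜ.image f
  have h_nbhd : #L ≤ #(nbhd Gᶜ (f c) Aᶜ) := by
    have h_mem : f c ∈ A := mem_image_of_mem f h_subtree.root_mem
    have h_card_A : #A ≤ #Lᶜ := card_image_le
    have := degree_add_degree_compl (G := G) (f c)
    have := card_nbhd_add_card_nbhd_compl_set (G := Gᶜ) (v := f c) A
    have := card_nbhd_add_card_nbhd_compl_add_one (G := Gᶜ) h_mem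
    omega
  have h_compl : univ \ Lᶜ = L := by simp
  obtain ⟨g, hg, -⟩ := hf.exists_extend (C' := univ) (Z := Aᶜ) ⟨mem_univ c, fun _ _ ↦ mem_univ _⟩
    (subset_univ _) (fun v hv h ↦ mem_compl.1 h (mem_image_of_mem f hv))
    (fun v hv _ ↦ by rwa [h_compl, par_eq (h_compl ▸ hv)])
    fun v hv hpv ↦ by
      rw [h_compl] at hv
      rw [par_eq hv] at hpv
      exact absurd h_subtree.root_mem hpv
  exact hg.contains

lemma HostParts.card_compl_add (h : HostParts G q I X Y F) :
    #(I ∪ (X ∪ Y))ᶜ + #I + #X + #Y = Fintype.card W := by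
  rw [← card_compl_add_card (I ∪ (X ∪ Y)), card_union_of_disjoint (disjoint_union_right.2
    ⟨h.disjoint_IX, h.disjoint_IY⟩), card_union_of_disjoint h.disjoint_XY]
  ring

lemma degree_lt_of_not_contains (h_fan : ¬Contains G (fan (q + 1))) (h_tree : ¬Contains Gᶜ T)
    (hT : T.IsTree) (hn : 9 * q + 1 ≤ Fintype.card V) (v : W) :
    G.degree v < Fintype.card V + q := by
  by_contra! hv
  have : Nonempty W := ⟨v⟩
  obtain ⟨r⟩ := hT.connected.nonempty
  obtain ⟨R⟩ := nonempty_rooting hT r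
  obtain ⟨S, -, hS, X, Y, I, F, h_dec, hX⟩ :=
    exists_matchingDecomp_of_le_card_nbhd h_fan (hv.trans_eq card_nbhd_univ.symm)
  have h_host := h_dec.hostParts (Y' := ∅) (q := q) (by omega) (by omega) (disjoint_empty_right I)
    (disjoint_empty_right X) (by simp)
  have h_split : R.IsSplit ∅ ∅ := ⟨by simp, by simp, by simp, by simp, by simp, by simp, by simp⟩
  have := h_dec.card_add_two_mul
  exact h_tree (h_host.contains_compl_of_empty hT hn h_split (by simp)
    (by simp [setNbhd]) (by simp) (by simp; omega))

lemma le_card_nbhd_compl_compl {n : ℕ} {Z : Finset W} {u : W} (hu : u ∉ I)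
    (h_card : 2 * q < #(nbhd G u I)) (h_degree : G.degree u < n + q)
    (hW : Fintype.card W + 1 = 2 * n) : n + q ≤ #(nbhd Gᶜ u (I ∪ Z)ᶜ) + #I + #Z := by
  have := degree_add_degree_compl (G := G) u
  have := card_nbhd_add_card_nbhd_compl_set (G := Gᶜ) (v := u) (I ∪ Z)
  have := card_nbhd_union_le (G := Gᶜ) (v := u) (Z := I) (Z' := Z)
  have := card_nbhd_add_card_nbhd_compl (G := G) hu
  have := card_le_card (nbhd_subset (G := Gᶜ) (v := u) (Z := Z))
  omega

/-- Either sufficiently many vertices of `I` have `#X - #Y` non-neighbours outside `I ∪ X ∪ Y`, and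
then a part of the tree can be embedded there, or the remaining vertices of `I` are adjacent to
almost all of these vertices. -/
lemma HostParts.contains_compl_of_lt_card_nbhd (h : HostParts G q I X Y F)
    (h_card : #I + 2 * #X = Fintype.card V) (hYX : #Y ≤ #X) (hFY : #F ≤ #Y)
    (hI : ∀ u ∉ I ∪ (X ∪ Y), 2 * q < #(nbhd G u I)) (h_fan : ¬Contains G (fan (q + 1)))
    (hT : T.IsTree) (hn : 9 * q + 1 ≤ Fintype.card V) (h_split : ∀ k ≤ q, R.HasSplit k q)
    (hW : Fintype.card W + 1 = 2 * Fintype.card V)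
    (h_degree : ∀ w, G.degree w < Fintype.card V + q) : Contains Gᶜ T := by
  have : Nonempty W := Fintype.card_pos_iff.1 (by omega)
  have hX := h.card_X_le
  obtain ⟨k, hk⟩ := Nat.exists_eq_add_of_le hYX
  have h_cardU := h.card_compl_add
  set U := (I ∪ (X ∪ Y))ᶜ
  have hIU : Disjoint I U := disjoint_of_subset_left subset_union_left disjoint_compl_right
  let K : Finset W := {a ∈ I | k ≤ #(nbhd Gᶜ a U)}
  have hKI : K ⊆ I := filter_subset _ I
  obtain hXK | hXK := le_or_gt #X #K
  · obtain ⟨D, L, hDL, rfl, hq, hN⟩ := h_split k (by omega)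
    have := le_card_sdiff F K
    refine h.contains_compl (K := K) (U := U) hT hn hDL hq.le hN (by omega) (by omega) hKI
      (by omega) disjoint_compl_left fun w hw ↦ ?_
    obtain hw | hw := mem_union.1 hw
    · exact (mem_filter.1 hw).2
    · have : _ ≤ #(nbhd Gᶜ w U) + _ + _ := le_card_nbhd_compl_compl (disjoint_right.1 hIU hw)
        (hI w (mem_compl.1 hw)) (h_degree w) hW
      have := card_union_le X Y
      omega
  · refine contains_compl_of_card_nbhd_compl_lt (A := I \ K) (k := k) h_fan hT hn
      (h_split 0 (Nat.zero_le q)) (disjoint_of_subset_left sdiff_subset hIU) (fun a ha ↦ ?_)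
      (fun u hu ↦ ?_) (by omega) (by omega) (sdiff_nonempty.2 fun hIK ↦ ?_)
    · simpa [K, (mem_sdiff.1 ha).1] using (mem_sdiff.1 ha).2
    · have := hI u (mem_compl.1 hu)
      have := card_nbhd_le_add_card_sdiff (G := G) (v := u) (Z := I) (Z' := I \ K)
      rw [Finset.sdiff_sdiff_eq_self hKI] at this
      omega
    · have := card_le_card hIK
      have := h.le_card_I
      omega

lemma contains_compl_of_le_degree (h_fan : ¬Contains G (fan (q + 1))) (hT : T.IsTree)
    (hn : 9 * q + 1 ≤ Fintype.card V) (h_split : ∀ k ≤ q, R.HasSplit k q)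
    (hW : Fintype.card W + 1 = 2 * Fintype.card V)
    (h_degree : ∀ w, G.degree w < Fintype.card V + q) (hv : Fintype.card V ≤ G.degree v) :
    Contains Gᶜ T := by
  have : Nonempty W := ⟨v⟩
  obtain ⟨S, -, hS, X, Y, I, F, h_dec, hX⟩ :=
    exists_matchingDecomp_of_le_card_nbhd h_fan (hv.trans_eq card_nbhd_univ.symm)
  rw [Nat.lt_succ_iff] at hX
  obtain ⟨Y', hY'⟩ : ∃ Y' : Finset W, ∀ w, w ∈ Y' ↔ w ∉ I ∧ w ∉ X ∧ #(nbhd G w I) ≤ 2 * q :=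
    ⟨({w | w ∉ I ∧ w ∉ X ∧ #(nbhd G w I) ≤ 2 * q} : Finset W), fun w ↦ mem_filter_univ w⟩
  have hIY : Disjoint I Y' := disjoint_right.2 fun w hw ↦ ((hY' w).1 hw).1
  have hXY : Disjoint X Y' := disjoint_right.2 fun w hw ↦ ((hY' w).1 hw).2.1
  have h_sparse : ∀ w ∈ Y', #(nbhd G w I) ≤ 2 * q := fun w hw ↦ ((hY' w).1 hw).2.2
  obtain h_le | h_le := le_total #X #Y'
  · exact h_dec.contains_compl hX hS hIY hXY h_sparse h_le hT hn (h_split 0 (Nat.zero_le q))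
  refine (h_dec.hostParts hX (by omega) hIY hXY h_sparse).contains_compl_of_lt_card_nbhd
    (h_dec.card_add_two_mul.trans hS) h_le ?_ ?_ h_fan hT hn h_split hW h_degree
  · exact h_dec.card_F_le_of_forall_mem hX fun w hwI hwX hw ↦ (hY' w).2 ⟨hwI, hwX, hw⟩
  · intro u hu
    simp only [mem_union, hY'] at hu
    lia

lemma contains_fan_or_contains_compl (hT : T.IsTree) (hn : 9 * q + 1 ≤ Fintype.card V)
    (hn' : q ^ 2 + q + 1 ≤ Fintype.card V) (hW : Fintype.card W + 1 = 2 * Fintype.card V) :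
    Contains G (fan (q + 1)) ∨ Contains Gᶜ T := by
  by_contra! ⟨h_fan, h_tree⟩
  have : Nonempty W := Fintype.card_pos_iff.1 (by omega)
  obtain ⟨r⟩ := hT.connected.nonempty
  obtain ⟨R⟩ := nonempty_rooting hT r
  obtain ⟨v, hv⟩ : ∃ v, Fintype.card V ≤ G.degree v := by
    by_contra! h_lt
    refine h_tree (contains_of_isTree_of_card_le_degree hT fun w ↦ ?_)
    have := degree_add_degree_compl (G := G) w
    have := h_lt w
    omega
  have h_degree := degree_lt_of_not_contains h_fan h_tree hT hn
  obtain ⟨z, hz⟩ := exists_degree_lt h_fan hn hn' hW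
  have : Nontrivial V := Fintype.one_lt_card_iff_nontrivial.1 (by have := h_degree v; omega)
  have h_few (c : V) : #{u ∈ R.leaves | R.par u = c} < q := by
    by_contra! hc
    refine h_tree (contains_compl_of_card_pendant_ge (c := c) hT hc (fun u hu w ↦ ?_) hW h_degree
      hz)
    obtain ⟨h_leaf, rfl⟩ := mem_filter.1 hu
    refine ⟨fun h ↦ (Rooting.par_eq_of_mem_leaves h_leaf h).symm, ?_⟩
    rintro rfl
    exact R.adj_par (ne_of_mem_of_not_mem h_leaf Rooting.root_notMem_leaves)
  exact h_tree (contains_compl_of_le_degree h_fan hT hn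
    (fun k hk ↦ Rooting.hasSplit hT hn hn' h_few hk) hW h_degree hv)

end Main

end RamseyTreeFan

theorem ramsey_tree_fan_upper_general {V W : Type*} [Fintype V] [Fintype W]
    (m n : ℕ) (hn : m ^ 2 - m + 1 ≤ n) (hmn : 9 * m ≤ n + 8)
    (T : SimpleGraph V) (hT : T.IsTree) (hTcard : Fintype.card V = n)
    (G : SimpleGraph W) (hGcard : Fintype.card W = 2 * n - 1) :
    Contains G (fan m) ∨ Contains Gᶜ T := by
  subst hTcard
  obtain _ | q := m
  · obtain ⟨v⟩ : Nonempty W := Fintype.card_pos_iff.1 (by omega)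
    exact .inl (RamseyTreeFan.contains_fan_of_hasMatching (v := v) (Z := ∅) (by simp) .zero)
  · have h_sq : (q + 1) ^ 2 - (q + 1) = q ^ 2 + q := Nat.sub_eq_of_eq_add (by ring)
    exact RamseyTreeFan.contains_fan_or_contains_compl hT (by omega) (by omega) (by omega)

/-- **Theorem 4 (upper bound)**: for `m ≥ 9` and `n ≥ m² - m + 1`, any graph `G` on `2n - 1`
vertices contains the fan `F_m` or its complement contains any given tree on `n` vertices. -/
theorem ramsey_tree_fan_upper {V W : Type*} [Fintype V] [Fintype W]
    (m n : ℕ) (hm : 9 ≤ m) (hn : m ^ 2 - m + 1 ≤ n)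
    (T : SimpleGraph V) (hT : T.IsTree) (hTcard : Fintype.card V = n)
    (G : SimpleGraph W) (hGcard : Fintype.card W = 2 * n - 1) :
    Contains G (fan m) ∨ Contains Gᶜ T := by
  have h_sq : 9 * m ≤ m ^ 2 - m + 9 := by
    have := Nat.mul_le_mul hm hm
    zify [Nat.le_self_pow two_ne_zero m]
    nlinarith
  exact ramsey_tree_fan_upper_general m n hn (by omega) T hT hTcard G hGcard
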